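/- Let r ≥ 1, k ≥ 1 and N ≥ 1 be integers. Work in the free group F on the generators a_1, …, a_r, t. Let W = t^{ε_1} W_1 t^{ε_2} W_2 ⋯ t^{ε_k} W_k, where each ε_i is a nonzero integer and each W_i is a nonempty reduced word in the letters a_1, …, a_r. Suppose that W_1, …, W_k freely generate a subgroup of the free group on a_1, …, a_r, i.e. the homomorphism from the free group of rank k to the free group on a_1, …, a_r sending the i-th basis element to W_i is injective. Then the one-relator group G = ⟨a_1, …, a_r, t ∣ W^N⟩, i.e. the quotient of F by the normal closure of W^N, is coherent. -/

import Mathlib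

/-!
Let `L` be a finitely generated subgroup of `G`. In the Cayley graph of `G` the edges labeled by `t`
form the lines `p⟨t⟩`; an `L`-invariant relation `E` on the lines tells which stretches of them are
used, and its cells are the readings of the relator whose powers of `t` all run inside these
stretches. Each cell contains an edge of its own, so among the relations that are finite modulo `L`
and connect generators of `L` there is one with the smallest number of orbits of edges minus orbits
of cells.

Map a free group onto `L`, and impose the holonomies of the finitely many orbits of cells as
relations. This gives a finitely presented group `Λ` over `L` and a flat labeling of `E` in the
kernel of `Λ → L`. By minimality the labeling can be extended, remaining flat, over every cell that
misses only one power of `t`. Once no such cell is left, the labels on the remaining edges are found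
by means of a permutation representation of the subgroup `K` generated by `t` and the words `W_i`,
which is the one-relator group with independent coefficients. A flat labeling of all of `G` is a
coboundary; correcting by it splits `Λ → L`, so `L` is a retract of a finitely presented group.
-/

/-- A word over the alphabet `α` (a list of letters with exponents `±1`) is *reduced*
if it contains no adjacent pair of the form `(s, e) (s, ¬e)`. -/
def WordReduced {α : Type*} (w : List (α × Bool)) : Prop :=
  List.Chain' (fun p q => ¬(p.1 = q.1 ∧ p.2 = !q.2)) w

/-- A group is *finitely presented* if it is isomorphic to the quotient of a free group
on a finite set of generators by the normal closure of a finite set of relators. -/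
def FinitelyPresentedGroup (G : Type*) [Group G] : Prop :=
  ∃ (α : Type) (_ : Fintype α) (rels : Finset (FreeGroup α)),
    Nonempty (PresentedGroup (rels : Set (FreeGroup α)) ≃* G)

/-- A group is *coherent* if every finitely generated subgroup is finitely presented. -/
def CoherentGroup (G : Type*) [Group G] : Prop :=
  ∀ H : Subgroup G, H.FG → FinitelyPresentedGroup H

/-- The word `a^e` : the letter `a` repeated `|e|` times, with exponent sign that of `e`. -/
def letterPow {α : Type*} (a : α) (e : ℤ) : List (α × Bool) :=
  List.replicate e.natAbs (a, decide (0 < e))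

/-- Re-express a word over the alphabet `α` as a word over a larger alphabet `β`
via a map `f : α → β` of alphabets. -/
def embedWord {α β : Type*} (f : α → β) (w : List (α × Bool)) : List (β × Bool) :=
  w.map fun p => (f p.1, p.2)

/-- The word `W = t^{ε₁} W₁ t^{ε₂} W₂ ⋯ t^{ε_k} W_k` over the alphabet
`Fin r ⊕ Unit`, where `Sum.inl i` is the generator `aᵢ` and `Sum.inr ()` is `t`. -/
def windmillWord (r k : ℕ) (ε : Fin k → ℤ) (Wi : Fin k → List (Fin r × Bool)) :
    List ((Fin r ⊕ Unit) × Bool) :=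
  ((List.finRange k).map fun i =>
    letterPow (Sum.inr () : Fin r ⊕ Unit) (ε i) ++ embedWord Sum.inl (Wi i)).flatten

universe u

/-- The ordered product `v 0 * v 1 * ⋯ * v (n - 1)`. -/
def prodRange {M : Type*} [Monoid M] (v : ℕ → M) (n : ℕ) : M :=
  ((List.range n).map v).prod

section prodRange

variable {M M' : Type*} [Monoid M] [Monoid M'] {Λ : Type*} [Group Λ]

@[simp] theorem prodRange_zero (v : ℕ → M) : prodRange v 0 = 1 := rfl

theorem prodRange_succ (v : ℕ → M) (n : ℕ) : prodRange v (n + 1) = prodRange v n * v n :=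
  List.prod_range_succ v n

theorem prodRange_congr {v w : ℕ → M} {n : ℕ} (h : ∀ j < n, v j = w j) :
    prodRange v n = prodRange w n :=
  congrArg List.prod (List.map_congr_left fun j hj => h j (List.mem_range.1 hj))

theorem prodRange_add (v : ℕ → M) (m n : ℕ) :
    prodRange v (m + n) = prodRange v m * prodRange (fun j => v (m + j)) n := by
  simp only [prodRange, List.range_add, List.map_append, List.prod_append, List.map_map,
    Function.comp_def]

theorem map_prodRange (φ : M →* M') (v : ℕ → M) (n : ℕ) :
    φ (prodRange v n) = prodRange (fun j => φ (v j)) n := by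
  simp only [prodRange, map_list_prod, List.map_map, Function.comp_def]

theorem prodRange_eq_one {v : ℕ → M} {n : ℕ} (h : ∀ j < n, v j = 1) : prodRange v n = 1 :=
  List.prod_eq_one <| by simpa using h

theorem prodRange_periodic_mul {v : ℕ → M} {k : ℕ} (hv : Function.Periodic v k) (N : ℕ) :
    prodRange v (k * N) = prodRange v k ^ N := by
  induction N with
  | zero => simp
  | succ N ih =>
    rw [Nat.mul_succ, prodRange_add, ih, pow_succ]
    congr 1
    refine prodRange_congr fun j _ => ?_
    rw [add_comm, mul_comm]
    exact hv.nat_mul N j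

theorem exists_prodRange_update_eq_one (v : ℕ → Λ) {n j₀ : ℕ} (hj₀ : j₀ < n) :
    ∃ z, prodRange (Function.update v j₀ z) n = 1 := by
  obtain ⟨d, rfl⟩ : ∃ d, n = j₀ + (1 + d) := ⟨n - j₀ - 1, by omega⟩
  refine ⟨(prodRange v j₀)⁻¹ * (prodRange (fun j => v (j₀ + (1 + j))) d)⁻¹, ?_⟩
  have before : ∀ z, prodRange (Function.update v j₀ z) j₀ = prodRange v j₀ := fun z =>
    prodRange_congr fun j hj => Function.update_of_ne (by omega) _ _
  have after : ∀ z j, Function.update v j₀ z (j₀ + (1 + j)) = v (j₀ + (1 + j)) := fun z j =>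
    Function.update_of_ne (by omega) _ _
  simp only [prodRange_add, before, after, prodRange_succ, prodRange_zero]
  simp

theorem prodRange_shift_eq_one {v : ℕ → Λ} {n : ℕ} (hv : Function.Periodic v n)
    (h : prodRange v n = 1) (i : ℕ) : prodRange (fun j => v (i + j)) n = 1 := by
  have split : prodRange v (n + i) = prodRange v i * prodRange (fun j => v (i + j)) n := by
    rw [add_comm, prodRange_add]
  have shift : prodRange (fun j => v (n + j)) i = prodRange v i :=
    prodRange_congr fun j _ => by rw [add_comm, hv]
  rw [prodRange_add, h, one_mul, shift] at split
  exact left_eq_mul.1 split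

theorem prodRange_telescope (v : ℕ → Λ) (n : ℕ) :
    prodRange (fun j => (v j)⁻¹ * v (j + 1)) n = (v 0)⁻¹ * v n := by
  induction n with
  | zero => simp
  | succ n ih => rw [prodRange_succ, ih]; group

end prodRange

section RightShift

variable {G Λ : Type*} [Group G] [Group Λ]

/-- `G` acting on functions `G → Λ` by right translation of the argument. -/
def rightShift (G Λ : Type*) [Group G] [Group Λ] : G →* MulAut (G → Λ) where
  toFun g :=
    { toFun := fun u p => u (p * g)
      invFun := fun u p => u (p * g⁻¹)
      left_inv := fun u => by simp
      right_inv := fun u => by simp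
      map_mul' := fun _ _ => rfl }
  map_one' := by ext; simp
  map_mul' g h := by ext; simp [mul_assoc]

@[simp] theorem rightShift_apply (g p : G) (u : G → Λ) : rightShift G Λ g u p = u (p * g) := rfl

end RightShift

section Cosets

variable {K G Λ : Type*} [Group K] [Group G] [Group Λ]

theorem exists_coset_rep {ι : K →* G} (hι : Function.Injective ι) :
    ∃ (rep : G → G) (co : G → K), (∀ g, rep g * ι (co g) = g) ∧
      (∀ g κ, rep (g * ι κ) = rep g) ∧ (∀ g κ, co (g * ι κ) = co g * κ) := by
  let rep : G → G := fun g => (QuotientGroup.mk (s := ι.range) g).out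
  have mem_coset : ∀ g, ∃ κ, rep g * ι κ = g := fun g => by
    obtain ⟨κ, hκ⟩ := QuotientGroup.eq.1 (QuotientGroup.out_eq' (QuotientGroup.mk (s := ι.range) g))
    exact ⟨κ, by rw [hκ]; exact mul_inv_cancel_left _ _⟩
  choose co hco using mem_coset
  have rep_mul : ∀ g κ, rep (g * ι κ) = rep g := fun g κ =>
    congrArg Quotient.out (QuotientGroup.mk_mul_of_mem g ⟨κ, rfl⟩)
  refine ⟨rep, co, hco, rep_mul, fun g κ => hι (mul_left_cancel (a := rep g) ?_)⟩
  rw [map_mul, ← mul_assoc, hco, ← rep_mul g κ, hco]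

/-- The left component of `β` is a cocycle on `B` with values in `G → Λ`. It is a coboundary because
`B` acts freely on `G`. -/
theorem exists_lift_of_cocycle {B Λ' : Type*} [Group B] [Group Λ']
    {β : B →* (G → Λ) ⋊[rightShift G Λ] G}
    (hβ : Function.Injective (SemidirectProduct.rightHom.comp β)) {π : Λ →* Λ'}
    (hπ : Function.Surjective π) {f : G → Λ'}
    (hf : ∀ b p, π ((β b).left p) = (f p)⁻¹ * f (p * (β b).right)) :
    ∃ h : G → Λ, (∀ p, π (h p) = f p) ∧ ∀ b p, h (p * (β b).right) = h p * (β b).left p := by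
  obtain ⟨rep, co, rep_mul, rep_mul_right, co_mul_right⟩ := exists_coset_rep hβ
  choose lift lift_spec using hπ
  refine ⟨fun p => lift (f (rep p)) * (β (co p)).left (rep p), fun p => ?_, fun b p => ?_⟩
  · rw [map_mul, lift_spec, hf, mul_inv_cancel_left]
    exact congrArg f (rep_mul p)
  · have rep_mul_b : rep (p * (β b).right) = rep p := rep_mul_right p b
    have co_mul_b : co (p * (β b).right) = co p * b := co_mul_right p b
    beta_reduce
    rw [rep_mul_b, co_mul_b, map_mul, SemidirectProduct.mul_left, Pi.mul_apply, rightShift_apply,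
      mul_assoc]
    exact congrArg (fun q => _ * (_ * (β b).left q)) (rep_mul p)

theorem injective_rightHom_comp_zpowersHom {T : (G → Λ) ⋊[rightShift G Λ] G}
    (hT : ¬IsOfFinOrder T.right) :
    Function.Injective (SemidirectProduct.rightHom.comp (zpowersHom _ T)) := by
  refine fun m n h => injective_zpow_iff_not_isOfFinOrder.2 hT ?_
  rwa [MonoidHom.comp_apply, MonoidHom.comp_apply, zpowersHom_apply, zpowersHom_apply, map_zpow,
    map_zpow] at h

theorem exists_inv_mul_eq_of_not_isOfFinOrder {z : G} (hz : ¬IsOfFinOrder z) (u : G → Λ) :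
    ∃ β : G → Λ, ∀ g, (β g)⁻¹ * β (g * z) = u g := by
  let T : (G → Λ) ⋊[rightShift G Λ] G := ⟨u, z⟩
  obtain ⟨h, -, hh⟩ := exists_lift_of_cocycle (β := zpowersHom _ T) (π := (1 : Λ →* Unit))
    (f := fun _ => 1) (injective_rightHom_comp_zpowersHom hz) (fun _ => ⟨1, rfl⟩) fun _ _ => rfl
  refine ⟨h, fun g => inv_mul_eq_iff_eq_mul.2 ?_⟩
  simpa [T] using hh (.ofAdd 1) g

end Cosets

section LineRelations

variable {G : Type u} [Group G] {t : G} {L : Subgroup G} {E : Setoid G}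

/-- An `L`-invariant equivalence relation on `G` whose classes lie in the lines `p⟨t⟩`. -/
structure IsLineRel (t : G) (L : Subgroup G) (E : Setoid G) : Prop where
  le_leftRel : E ≤ QuotientGroup.leftRel (Subgroup.zpowers t)
  mul_left : ∀ l ∈ L, ∀ ⦃p q⦄, E p q → E (l * p) (l * q)

/-- The points of `G` that are not the top of their class, lines being ordered by the exponent of
`t`. -/
def nonTop (t : G) (E : Setoid G) : Set G := {p | ∃ i : ℤ, 0 < i ∧ E p (p * t ^ i)}

/-- The equivalence relation generated by `E` and the orbit `l * a ~ l * b`, `l ∈ L`, of a link. -/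
def addLink (L : Subgroup G) (E : Setoid G) (a b : G) : Setoid G :=
  E ⊔ Relation.EqvGen.setoid fun p q => ∃ l ∈ L, p = l * a ∧ q = l * b

theorem addLink_le_iff {a b : G} {R : Setoid G} :
    addLink L E a b ≤ R ↔ E ≤ R ∧ ∀ l ∈ L, R (l * a) (l * b) := by
  refine sup_le_iff.trans (and_congr_right fun _ => ?_)
  constructor
  · exact fun h l hl => h (Relation.EqvGen.rel _ _ ⟨l, hl, rfl, rfl⟩)
  · rintro h
    refine Setoid.eqvGen_le ?_
    rintro _ _ ⟨l, hl, rfl, rfl⟩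
    exact h l hl

theorem le_addLink (L : Subgroup G) (E : Setoid G) (a b : G) : E ≤ addLink L E a b :=
  (addLink_le_iff.1 le_rfl).1

theorem addLink_rel_mul {a b l : G} (hl : l ∈ L) : addLink L E a b (l * a) (l * b) :=
  (addLink_le_iff.1 le_rfl).2 l hl

theorem addLink_rel (L : Subgroup G) (E : Setoid G) (a b : G) : addLink L E a b a b := by
  simpa only [one_mul] using addLink_rel_mul (E := E) (a := a) (b := b) L.one_mem

theorem addLink_comm (L : Subgroup G) (E : Setoid G) (a b : G) :
    addLink L E a b = addLink L E b a :=
  le_antisymm (addLink_le_iff.2 ⟨le_addLink .., fun _ hl => Setoid.symm' _ (addLink_rel_mul hl)⟩)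
    (addLink_le_iff.2 ⟨le_addLink .., fun _ hl => Setoid.symm' _ (addLink_rel_mul hl)⟩)

theorem leftRel_zpowers_iff {p q : G} :
    QuotientGroup.leftRel (Subgroup.zpowers t) p q ↔ ∃ m : ℤ, q = p * t ^ m := by
  simp only [QuotientGroup.leftRel_apply, Subgroup.mem_zpowers_iff, eq_inv_mul_iff_mul_eq, eq_comm]

theorem exists_rel_of_mem_nonTop_addLink {a b p : G} (hp : p ∈ nonTop t (addLink L E a b)) :
    p ∈ nonTop t E ∨ ∃ l ∈ L, E (l * a) p ∨ E (l * b) p := by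
  by_contra! hcon
  obtain ⟨i, hi, h⟩ := hp
  have class_unchanged : addLink L E a b ≤ Setoid.ker (E p) := addLink_le_iff.2
    ⟨fun z w hzw => propext ⟨fun h => E.trans' h hzw, fun h => E.trans' h (E.symm' hzw)⟩,
      fun l hl => propext ⟨fun h => absurd (E.symm' h) (hcon.2 l hl).1,
        fun h => absurd (E.symm' h) (hcon.2 l hl).2⟩⟩
  exact hcon.1 ⟨i, hi, (class_unchanged h).mp (E.refl' p)⟩

namespace IsLineRel

variable (hE : IsLineRel t L E)
include hE

theorem exists_zpow {p q : G} (h : E p q) : ∃ m : ℤ, q = p * t ^ m :=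
  leftRel_zpowers_iff.1 (hE.le_leftRel h)

theorem mul_left_iff {l p q : G} (hl : l ∈ L) : E (l * p) (l * q) ↔ E p q :=
  ⟨fun h => by simpa using hE.mul_left l⁻¹ (L.inv_mem hl) h, fun h => hE.mul_left l hl h⟩

theorem mul_mem_nonTop_iff {l p : G} (hl : l ∈ L) : l * p ∈ nonTop t E ↔ p ∈ nonTop t E := by
  simp only [nonTop, Set.mem_ofPred_eq, mul_assoc, hE.mul_left_iff hl]

protected theorem addLink {a b : G} (hab : QuotientGroup.leftRel (Subgroup.zpowers t) a b) :
    IsLineRel t L (addLink L E a b) where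
  le_leftRel := addLink_le_iff.2 ⟨hE.le_leftRel, fun l _ => by
    simpa only [QuotientGroup.leftRel_apply, mul_inv_rev, mul_assoc, inv_mul_cancel_left] using hab⟩
  mul_left l hl := (addLink_le_iff (R := (addLink L E a b).comap (l * ·))).2
    ⟨fun _ _ h => le_addLink _ _ _ _ (hE.mul_left l hl h), fun l' hl' => by
      simpa only [Setoid.comap_rel, mul_assoc] using addLink_rel_mul (L.mul_mem hl hl')⟩

theorem eq_of_rel {p q : G} (hp : p ∉ nonTop t E) (hq : q ∉ nonTop t E) (h : E p q) : p = q := by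
  obtain ⟨m, rfl⟩ := hE.exists_zpow h
  rcases lt_trichotomy m 0 with hm | rfl | hm
  · exact absurd ⟨-m, by omega, by simpa using E.symm' h⟩ hq
  · simp
  · exact absurd ⟨m, hm, h⟩ hp

theorem exists_label {m : G} (hm : m ∉ nonTop t E) :
    ∃ lab : G → Option L, (∀ p q, E p q → lab p = lab q) ∧
      ∀ p l, lab p = some l ↔ E p (l * m) := by
  classical
  let lab : G → Option L := fun p => if h : ∃ l : L, E p (l * m) then some h.choose else none
  have lab_eq : ∀ p l, lab p = some l ↔ E p (l * m) := fun p l => by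
    by_cases h : ∃ l : L, E p (l * m)
    · have spec := h.choose_spec
      simp only [lab, dif_pos h, Option.some_inj]
      refine ⟨fun hl => hl ▸ spec, fun hl => Subtype.ext (mul_right_cancel (b := m) ?_)⟩
      exact hE.eq_of_rel (by rwa [hE.mul_mem_nonTop_iff (SetLike.coe_mem _)])
        (by rwa [hE.mul_mem_nonTop_iff l.2]) (E.trans' (E.symm' spec) hl)
    · simp only [lab, dif_neg h, reduceCtorEq, false_iff]
      exact fun hl => h ⟨l, hl⟩
  refine ⟨lab, fun p q hpq => Option.ext fun l => ?_, lab_eq⟩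
  rw [lab_eq, lab_eq]
  exact ⟨E.trans' (E.symm' hpq), E.trans' hpq⟩

/-- Adding the link merges the class of each `l * m` into that of `l * q`, which is higher. -/
theorem notMem_nonTop_addLink {a b m q : G} (hm : m ∉ nonTop t E) (ham : E a m)
    (hq : q ∉ nonTop t E) (hbq : E b q) {j : ℤ} (hj : 0 < j) (hmq : q = m * t ^ j)
    (hne : ∀ l ∈ L, q ≠ l * m) : q ∉ nonTop t (addLink L E a b) := by
  rintro ⟨i, hi, h⟩
  obtain ⟨lab, lab_congr, lab_eq⟩ := hE.exists_label hm
  let merge : G → G := fun z => (lab z).elim z (fun l => l * q)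
  have merge_some : ∀ {z l}, lab z = some l → merge z = l * q := fun h => by simp [merge, h]
  have merge_none : ∀ {z}, lab z = none → merge z = z := fun h => by simp [merge, h]
  have lab_of_rel_q : ∀ {z l : G}, l ∈ L → E (l * q) z → lab z = none := fun {z l} hl hz =>
    Option.eq_none_iff_forall_ne_some.2 fun l' hl' => by
      have := hE.eq_of_rel ((hE.mul_mem_nonTop_iff hl).not.2 hq)
        ((hE.mul_mem_nonTop_iff l'.2).not.2 hm) (E.trans' hz ((lab_eq _ _).1 hl'))
      exact hne (l⁻¹ * l') (L.mul_mem (L.inv_mem hl) l'.2) (by rw [mul_assoc, ← this]; simp)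
  have merge_rel : addLink L E a b ≤ E.comap merge := by
    refine addLink_le_iff.2 ⟨fun z w hzw => ?_, fun l hl => ?_⟩
    · rw [Setoid.comap_rel]
      rcases hz : lab z with _ | l
      · rwa [merge_none hz, merge_none (lab_congr z w hzw ▸ hz)]
      · rw [merge_some hz, merge_some (lab_congr z w hzw ▸ hz)]
    · have hlb : E (l * q) (l * b) := hE.mul_left l hl (E.symm' hbq)
      have hla : lab (l * a) = some ⟨l, hl⟩ := (lab_eq _ _).2 (hE.mul_left l hl ham)
      rwa [Setoid.comap_rel, merge_some hla, merge_none (lab_of_rel_q hl hlb)]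
  have merged : E (merge q) (merge (q * t ^ i)) := merge_rel h
  rw [merge_none (lab_of_rel_q L.one_mem (by simp))] at merged
  rcases hl : lab (q * t ^ i) with _ | l
  · exact hq ⟨i, hi, by rwa [merge_none hl] at merged⟩
  · rw [merge_some hl] at merged
    have hlq : q = l * q := hE.eq_of_rel hq ((hE.mul_mem_nonTop_iff l.2).not.2 hq) merged
    refine (hE.mul_mem_nonTop_iff l.2).not.2 hm ⟨j + i, by omega, ?_⟩
    rw [zpow_add, ← mul_assoc, mul_assoc (l : G), ← hmq, ← hlq]
    exact E.symm' ((lab_eq _ _).1 hl)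

theorem exists_lowest_top {a b : G} (hab : QuotientGroup.leftRel (Subgroup.zpowers t) a b)
    (h : ∃ m ∉ nonTop t E, E a m ∨ E b m) :
    ∃ m ∉ nonTop t E, (E a m ∨ E b m) ∧
      ∀ q ∉ nonTop t E, E a q ∨ E b q → ∃ i : ℤ, 0 ≤ i ∧ q = m * t ^ i := by
  obtain ⟨m, hm, ham⟩ := h
  by_cases hlow : ∀ q ∉ nonTop t E, E a q ∨ E b q → ∃ i : ℤ, 0 ≤ i ∧ q = m * t ^ i
  · exact ⟨m, hm, ham, hlow⟩
  push Not at hlow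
  obtain ⟨q, hq, haq, hqm⟩ := hlow
  have line : ∀ {x}, E a x ∨ E b x → QuotientGroup.leftRel (Subgroup.zpowers t) a x := fun h =>
    h.elim (fun h => hE.le_leftRel h) fun h => Setoid.trans' _ hab (hE.le_leftRel h)
  obtain ⟨i, hi⟩ := leftRel_zpowers_iff.1 (Setoid.trans' _ (Setoid.symm' _ (line ham)) (line haq))
  have hi0 : i < 0 := not_le.1 fun h => hqm i h hi
  have not_rel : ¬E m q := fun h => hqm 0 le_rfl (by simp [hE.eq_of_rel hm hq h])
  refine ⟨q, hq, haq, fun x hx hax => ?_⟩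
  have two_classes : E m x ∨ E q x := by
    rcases ham with h | h <;> rcases haq with h' | h' <;> rcases hax with h'' | h''
    all_goals first
      | exact Or.inl (E.trans' (E.symm' h) h'')
      | exact Or.inr (E.trans' (E.symm' h') h'')
      | exact absurd (E.trans' (E.symm' h) h') not_rel
  rcases two_classes with h | h
  · exact ⟨-i, by omega, by rw [hi, ← hE.eq_of_rel hm hx h]; simp⟩
  · exact ⟨0, le_rfl, by simp [hE.eq_of_rel hq hx h]⟩

/-- Of two tops joined by a link only the lower one ceases to be a top. -/
theorem nonTop_addLink {a b : G} (hab : QuotientGroup.leftRel (Subgroup.zpowers t) a b) :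
    nonTop t (addLink L E a b) ⊆ nonTop t E ∨ ∃ m ∉ nonTop t E, (E a m ∨ E b m) ∧
      ∀ p ∈ nonTop t (addLink L E a b), p ∈ nonTop t E ∨ ∃ l ∈ L, p = l * m := by
  have new_point : ∀ p ∈ nonTop t (addLink L E a b), p ∉ nonTop t E →
      ∃ l ∈ L, ∃ q ∉ nonTop t E, (E a q ∨ E b q) ∧ p = l * q := fun p hp hp' => by
    obtain ⟨l, hl, h⟩ := (exists_rel_of_mem_nonTop_addLink hp).resolve_left hp'
    rw [← mul_inv_cancel_left l p, hE.mul_left_iff hl, hE.mul_left_iff hl] at h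
    exact ⟨l, hl, l⁻¹ * p, by rwa [hE.mul_mem_nonTop_iff (L.inv_mem hl)], h, by simp⟩
  by_cases htop : ∃ m ∉ nonTop t E, E a m ∨ E b m
  · obtain ⟨m, hm, hma, low⟩ := hE.exists_lowest_top hab htop
    refine Or.inr ⟨m, hm, hma, fun p hp => or_iff_not_imp_left.2 fun hp' => ?_⟩
    obtain ⟨l, hl, q, hq, haq, rfl⟩ := new_point p hp hp'
    by_cases hqm : ∃ l' ∈ L, q = l' * m
    · obtain ⟨l', hl', rfl⟩ := hqm
      exact ⟨l * l', L.mul_mem hl hl', (mul_assoc ..).symm⟩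
    push Not at hqm
    obtain ⟨i, hi, hqi⟩ := low q hq haq
    have not_rel : ¬E m q := fun h => hqm 1 L.one_mem (by simp [hE.eq_of_rel hm hq h])
    have hi : 0 < i := hi.lt_of_ne' fun h => not_rel (by simp [hqi, h])
    rw [(hE.addLink hab).mul_mem_nonTop_iff hl] at hp
    rcases hma with h | h <;> rcases haq with h' | h'
    · exact absurd (E.trans' (E.symm' h) h') not_rel
    · exact absurd hp (hE.notMem_nonTop_addLink hm h hq h' hi hqi hqm)
    · rw [addLink_comm] at hp
      exact absurd hp (hE.notMem_nonTop_addLink hm h hq h' hi hqi hqm)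
    · exact absurd (E.trans' (E.symm' h) h') not_rel
  · refine Or.inl fun p hp => by_contra fun hp' => ?_
    obtain ⟨-, -, q, hq, haq, -⟩ := new_point p hp hp'
    exact htop ⟨q, hq, haq⟩

theorem exists_jump_of_rel_top {Λ : Type*} [Group Λ] (ht : ¬IsOfFinOrder t) {a b m : G}
    (hab : QuotientGroup.leftRel (Subgroup.zpowers t) a b) (hnab : ¬E a b)
    (hm : m ∉ nonTop t E) (ham : E a m) (u : G → Λ) :
    ∃ β : G → Λ, (∀ p q, E p q → β p = β q) ∧ ∀ l ∈ L, (β (l * a))⁻¹ * β (l * b) = u l := by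
  obtain ⟨lab, lab_congr, lab_eq⟩ := hE.exists_label hm
  have lab_a : ∀ l (hl : l ∈ L), lab (l * a) = some ⟨l, hl⟩ := fun l hl =>
    (lab_eq _ _).2 (hE.mul_left l hl ham)
  suffices h : ∃ c : G → Λ, ∀ l ∈ L, (c l)⁻¹ * (lab (l * b)).elim 1 (fun l => c l) = u l by
    obtain ⟨c, hc⟩ := h
    refine ⟨fun z => (lab z).elim 1 (fun l => c l), fun p q h => by simp only [lab_congr p q h],
      fun l hl => ?_⟩
    simpa only [lab_a l hl, Option.elim_some] using hc l hl
  by_cases hb : ∃ z ∈ L, E b (z * m)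
  · obtain ⟨z, hz, hbz⟩ := hb
    have lab_b : ∀ l (hl : l ∈ L), lab (l * b) = some ⟨l * z, L.mul_mem hl hz⟩ := fun l hl =>
      (lab_eq _ _).2 (by simpa only [mul_assoc] using hE.mul_left l hl hbz)
    obtain ⟨i, hi⟩ := leftRel_zpowers_iff.1 (Setoid.trans' _
      (Setoid.symm' _ (hE.le_leftRel ham)) (Setoid.trans' _ hab (hE.le_leftRel hbz)))
    have hi0 : i ≠ 0 := fun h => hnab (E.trans' ham (E.symm' (by simpa [hi, h] using hbz)))
    have hz_conj : z = MulAut.conj m (t ^ i) := by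
      rw [MulAut.conj_apply, ← hi, mul_inv_cancel_right]
    have hz_order : ¬IsOfFinOrder z := by
      rw [hz_conj, ← MulEquiv.coe_toMonoidHom, (MulEquiv.injective _).isOfFinOrder_iff,
        isOfFinOrder_iff_zpow_eq_one]
      rintro ⟨n, hn, h⟩
      exact ht (isOfFinOrder_iff_zpow_eq_one.2 ⟨i * n, mul_ne_zero hi0 hn, by rw [zpow_mul, h]⟩)
    obtain ⟨c, hc⟩ := exists_inv_mul_eq_of_not_isOfFinOrder hz_order u
    exact ⟨c, fun l hl => by simpa only [lab_b l hl, Option.elim_some] using hc l⟩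
  · have lab_b : ∀ l ∈ L, lab (l * b) = none := fun l hl =>
      Option.eq_none_iff_forall_ne_some.2 fun l' hl' => by
        refine hb ⟨l⁻¹ * l', L.mul_mem (L.inv_mem hl) l'.2, ?_⟩
        rw [← hE.mul_left_iff hl, mul_assoc, mul_inv_cancel_left]
        exact (lab_eq _ _).1 hl'
    exact ⟨fun l => (u l)⁻¹, fun l hl => by simp [lab_b l hl]⟩

theorem exists_jump {Λ : Type*} [Group Λ] (ht : ¬IsOfFinOrder t) {a b m : G}
    (hab : QuotientGroup.leftRel (Subgroup.zpowers t) a b) (hnab : ¬E a b)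
    (hm : m ∉ nonTop t E) (hmab : E a m ∨ E b m) (u : G → Λ) :
    ∃ β : G → Λ, (∀ p q, E p q → β p = β q) ∧ ∀ l ∈ L, (β (l * a))⁻¹ * β (l * b) = u l := by
  rcases hmab with h | h
  · exact hE.exists_jump_of_rel_top ht hab hnab hm h u
  · obtain ⟨β, β_congr, hβ⟩ := hE.exists_jump_of_rel_top ht (Setoid.symm' _ hab)
      (fun h => hnab (E.symm' h)) hm h (fun l => (u l)⁻¹)
    exact ⟨β, β_congr, fun l hl => by simpa using congrArg (·⁻¹) (hβ l hl)⟩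

end IsLineRel

end LineRelations

/-- The word `t ^ exp 0 * coeff 0 * ⋯ * t ^ exp (length - 1) * coeff (length - 1)` in a letter `t`
and coefficients from `A`. The sequences are extended to all of `ℕ`, periodically in all
applications, so that the word can be read cyclically. -/
structure RelatorWord (A : Type*) where
  exp : ℕ → ℤ
  coeff : ℕ → A
  length : ℕ

namespace RelatorWord

variable {G : Type u} [Group G] {Λ : Type*} [Group Λ] (W : RelatorWord G) (t : G)

/-- The starting point `g * t ^ exp 0 * ⋯ * coeff (j - 1)` of the `j`-th power of `t` when `W` is
read from `g`. -/
def tail (g : G) (j : ℕ) : G := g * prodRange (fun i => t ^ W.exp i * W.coeff i) j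

/-- The end point of the `j`-th power of `t` when `W` is read from `g`. -/
def head (g : G) (j : ℕ) : G := W.tail t g j * t ^ W.exp j

/-- `E` identifies the two ends of the `j`-th power of `t` when `W` is read from `g`. -/
def Joined (E : Setoid G) (g : G) (j : ℕ) : Prop := E (W.tail t g j) (W.head t g j)

/-- The base points at which every power of `t` in `W` is joined by `E`. Such a base point stands
for the relator read from it, that is, for a `2`-cell of the Cayley complex. -/
def cells (E : Setoid G) : Set G := {g | ∀ j < W.length, W.Joined t E g j}

/-- The product of the differences of `f` along the powers of `t` in `W`, read from `g`. -/
def holonomy (f : G → Λ) (g : G) : Λ :=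
  prodRange (fun j => (f (W.tail t g j))⁻¹ * f (W.head t g j)) W.length

@[simp] theorem tail_zero (g : G) : W.tail t g 0 = g := mul_one g

theorem tail_succ (g : G) (j : ℕ) : W.tail t g (j + 1) = W.head t g j * W.coeff j := by
  simp only [tail, head, prodRange_succ, mul_assoc]

theorem tail_mul_left (l g : G) (j : ℕ) : W.tail t (l * g) j = l * W.tail t g j := mul_assoc ..

theorem head_mul_left (l g : G) (j : ℕ) : W.head t (l * g) j = l * W.head t g j := by
  simp only [head, tail_mul_left, mul_assoc]

theorem leftRel_tail_head (g : G) (j : ℕ) :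
    QuotientGroup.leftRel (Subgroup.zpowers t) (W.tail t g j) (W.head t g j) :=
  leftRel_zpowers_iff.2 ⟨_, rfl⟩

variable {W t} {L : Subgroup G} {E E' : Setoid G}

theorem Joined.mono (h : E ≤ E') {g : G} {j : ℕ} (hj : W.Joined t E g j) : W.Joined t E' g j :=
  h hj

theorem cells_mono (h : E ≤ E') : W.cells t E ⊆ W.cells t E' := fun _ hg j hj => (hg j hj).mono h

theorem joined_mul_left_iff (hE : IsLineRel t L E) {l g : G} (hl : l ∈ L) {j : ℕ} :
    W.Joined t E (l * g) j ↔ W.Joined t E g j := by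
  rw [Joined, tail_mul_left, head_mul_left, hE.mul_left_iff hl, Joined]

theorem mul_mem_cells_iff (hE : IsLineRel t L E) {l g : G} (hl : l ∈ L) :
    l * g ∈ W.cells t E ↔ g ∈ W.cells t E :=
  forall₂_congr fun _ _ => joined_mul_left_iff hE hl

theorem holonomy_congr {f f' : G → Λ} {g : G} (hg : g ∈ W.cells t E)
    (h : ∀ p q, E p q → (f' p)⁻¹ * f' q = (f p)⁻¹ * f q) :
    W.holonomy t f' g = W.holonomy t f g :=
  prodRange_congr fun j hj => h _ _ (hg j hj)

theorem mem_cells_addLink {g : G} {j₀ : ℕ}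
    (hg : ∀ j < W.length, j ≠ j₀ → W.Joined t E g j) :
    g ∈ W.cells t (addLink L E (W.tail t g j₀) (W.head t g j₀)) := fun j hj => by
  rcases eq_or_ne j j₀ with rfl | h
  · exact addLink_rel L E _ _
  · exact (hg j hj h).mono (le_addLink ..)

end RelatorWord

section Orbits

variable {G : Type u} [Group G] {L : Subgroup G}

/-- The orbit `L * g` as a point of `L \ G`. -/
def orb (L : Subgroup G) (g : G) : Quotient (QuotientGroup.rightRel L) := Quotient.mk _ g

theorem orb_eq_iff {g h : G} : orb L g = orb L h ↔ ∃ l ∈ L, h = l * g := by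
  rw [orb, orb, Quotient.eq, QuotientGroup.rightRel_apply]
  exact ⟨fun hh => ⟨_, hh, by simp⟩, by rintro ⟨l, hl, rfl⟩; simpa using hl⟩

theorem orb_mul_left {l g : G} (hl : l ∈ L) : orb L (l * g) = orb L g :=
  (orb_eq_iff.2 ⟨l, hl, rfl⟩).symm

theorem orb_mem_image_iff {S : Set G} (hS : ∀ l ∈ L, ∀ g, l * g ∈ S ↔ g ∈ S) {g : G} :
    orb L g ∈ orb L '' S ↔ g ∈ S := by
  refine ⟨?_, Set.mem_image_of_mem _⟩
  rintro ⟨x, hx, hxg⟩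
  obtain ⟨l, hl, rfl⟩ := orb_eq_iff.1 hxg
  exact (hS l hl x).2 hx

/-- Right translation on `L \ G`. -/
def orbTranslate (L : Subgroup G) (d : G) :
    Quotient (QuotientGroup.rightRel L) → Quotient (QuotientGroup.rightRel L) :=
  Quotient.map (· * d) fun a b hab => by
    obtain ⟨l, hl, rfl⟩ := orb_eq_iff.1 (Quotient.sound hab : orb L a = orb L b)
    exact Quotient.exact (orb_eq_iff.2 ⟨l, hl, mul_assoc l a d⟩)

theorem orbTranslate_injective (L : Subgroup G) (d : G) :
    Function.Injective (orbTranslate L d) := by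
  rintro ⟨a⟩ ⟨b⟩ h
  obtain ⟨l, hl, hb⟩ := orb_eq_iff.1 (show orb L (a * d) = orb L (b * d) from h)
  exact orb_eq_iff.2 ⟨l, hl, mul_right_cancel (hb.trans (mul_assoc l a d).symm)⟩

end Orbits

section Complexity

variable {G : Type u} [Group G] {t : G} {L : Subgroup G} {B : Set G} {E : Setoid G}
  {W : RelatorWord G}

namespace RelatorWord

theorem exists_mul_mem_nonTop_of_mem_cells (t : G) (hlen : 0 < W.length) (hexp : W.exp 0 ≠ 0)
    (E : Setoid G) : ∃ d, ∀ g ∈ W.cells t E, g * d ∈ nonTop t E := by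
  rcases hexp.lt_or_gt with h | h
  · refine ⟨t ^ W.exp 0, fun g hg => ⟨-W.exp 0, by omega, E.symm' ?_⟩⟩
    simpa [Joined, head, mul_assoc] using hg 0 hlen
  · refine ⟨1, fun g hg => ⟨W.exp 0, h, ?_⟩⟩
    simpa [Joined, head] using hg 0 hlen

theorem finite_orb_cells (hlen : 0 < W.length) (hexp : W.exp 0 ≠ 0)
    (hfin : (orb L '' nonTop t E).Finite) :
    (orb L '' W.cells t E).Finite ∧
      (orb L '' W.cells t E).ncard ≤ (orb L '' nonTop t E).ncard := by
  obtain ⟨d, hd⟩ := exists_mul_mem_nonTop_of_mem_cells t hlen hexp E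
  have maps : Set.MapsTo (orbTranslate L d) (orb L '' W.cells t E) (orb L '' nonTop t E) := by
    rintro _ ⟨g, hg, rfl⟩
    exact ⟨g * d, hd g hg, rfl⟩
  have inj := (orbTranslate_injective L d).injOn (s := orb L '' W.cells t E)
  exact ⟨hfin.of_injOn maps inj, Set.ncard_le_ncard_of_injOn _ maps inj hfin⟩

/-- The number of orbits of points that are not tops minus the number of orbits of cells. By
`finite_orb_cells` the subtraction does not truncate on the relations considered. -/
noncomputable def complexity (W : RelatorWord G) (t : G) (L : Subgroup G) (E : Setoid G) : ℕ :=
  (orb L '' nonTop t E).ncard - (orb L '' W.cells t E).ncard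

end RelatorWord

/-- Line relations with finitely many orbits of points below a top that contain the link from `r`
to `r * t` for each `r ∈ B`. -/
structure IsGoodRel (t : G) (L : Subgroup G) (B : Set G) (E : Setoid G) : Prop
    extends IsLineRel t L E where
  finite_nonTop : (orb L '' nonTop t E).Finite
  rel_mul : ∀ r ∈ B, E r (r * t)

theorem IsLineRel.orb_nonTop_addLink (hE : IsLineRel t L E) {a b : G}
    (hab : QuotientGroup.leftRel (Subgroup.zpowers t) a b) :
    orb L '' nonTop t (addLink L E a b) ⊆ orb L '' nonTop t E ∨
      ∃ m ∉ nonTop t E, (E a m ∨ E b m) ∧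
        orb L '' nonTop t (addLink L E a b) ⊆ insert (orb L m) (orb L '' nonTop t E) := by
  refine (hE.nonTop_addLink hab).imp (Set.image_mono (f := orb L)) ?_
  rintro ⟨m, hm, hmab, h⟩
  refine ⟨m, hm, hmab, ?_⟩
  rintro _ ⟨p, hp, rfl⟩
  rcases h p hp with hp' | ⟨l, hl, rfl⟩
  · exact Or.inr ⟨p, hp', rfl⟩
  · exact Or.inl (orb_mul_left hl)

protected theorem IsGoodRel.addLink (hE : IsGoodRel t L B E) {a b : G}
    (hab : QuotientGroup.leftRel (Subgroup.zpowers t) a b) :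
    IsGoodRel t L B (addLink L E a b) where
  toIsLineRel := hE.toIsLineRel.addLink hab
  finite_nonTop := by
    rcases hE.toIsLineRel.orb_nonTop_addLink hab with h | ⟨m, -, -, h⟩
    · exact hE.finite_nonTop.subset h
    · exact (hE.finite_nonTop.insert _).subset h
  rel_mul r hr := le_addLink _ _ _ _ (hE.rel_mul r hr)

theorem exists_isGoodRel (ht : ¬IsOfFinOrder t) (L : Subgroup G) (hB : B.Finite) :
    ∃ E, IsGoodRel t L B E := by
  induction B, hB using Set.Finite.induction_on with
  | empty =>
    have nonTop_bot : nonTop t (⊥ : Setoid G) = ∅ := Set.eq_empty_of_forall_notMem <| by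
      rintro p ⟨m, hm, h⟩
      exact ht (isOfFinOrder_iff_zpow_eq_one.2 ⟨m, hm.ne', left_eq_mul.1 h⟩)
    exact ⟨⊥, ⟨bot_le, fun l _ _ _ h => congrArg (l * ·) h⟩, by simp [nonTop_bot], by simp⟩
  | @insert a B _ _ ih =>
    obtain ⟨E, hE⟩ := ih
    have h := hE.addLink (leftRel_zpowers_iff.2 ⟨1, by rw [zpow_one]⟩ :
      QuotientGroup.leftRel (Subgroup.zpowers t) a (a * t))
    refine ⟨addLink L E a (a * t), h.toIsLineRel, h.finite_nonTop, ?_⟩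
    rintro r (rfl | hr)
    · exact addLink_rel L E r (r * t)
    · exact h.rel_mul r hr

/-- `E` has the least complexity among the relations satisfying `IsGoodRel`. -/
def IsMinimalRel (W : RelatorWord G) (t : G) (L : Subgroup G) (B : Set G) : Setoid G → Prop :=
  MinimalFor (IsGoodRel t L B) (W.complexity t L)

/-- Filling in the only missing power of `t` of a cell adds an orbit of cells. By minimality it must
also add an orbit of points below a top, and it cannot add a second orbit of cells. -/
protected theorem IsMinimalRel.addLink (hexp : W.exp 0 ≠ 0) (hE : IsMinimalRel W t L B E) {g : G}
    {j₀ : ℕ} (hj₀ : j₀ < W.length) (hg : ∀ j < W.length, j ≠ j₀ → W.Joined t E g j)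
    (hg₀ : ¬W.Joined t E g j₀) {E' : Setoid G}
    (hE' : E' = addLink L E (W.tail t g j₀) (W.head t g j₀)) :
    IsMinimalRel W t L B E' ∧
      (∃ m ∉ nonTop t E, E (W.tail t g j₀) m ∨ E (W.head t g j₀) m) ∧
      g ∈ W.cells t E' ∧ ∀ x ∈ W.cells t E', x ∈ W.cells t E ∨ ∃ l ∈ L, x = l * g := by
  have hline := W.leftRel_tail_head t g j₀
  have hgood : IsGoodRel t L B E' := hE' ▸ hE.1.addLink hline
  have hle : E ≤ E' := hE' ▸ le_addLink ..
  have hlen := Nat.zero_lt_of_lt hj₀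
  obtain ⟨fin, card_le⟩ := W.finite_orb_cells hlen hexp hE.1.finite_nonTop
  obtain ⟨fin', card_le'⟩ := W.finite_orb_cells hlen hexp hgood.finite_nonTop
  have hgE' : g ∈ W.cells t E' := hE' ▸ W.mem_cells_addLink hg
  have new_orb : orb L g ∉ orb L '' W.cells t E := by
    rw [orb_mem_image_iff fun l hl x => W.mul_mem_cells_iff hE.1.toIsLineRel hl]
    exact fun h => hg₀ (h j₀ hj₀)
  have subset : insert (orb L g) (orb L '' W.cells t E) ⊆ orb L '' W.cells t E' :=
    Set.insert_subset ⟨g, hgE', rfl⟩ (Set.image_mono (W.cells_mono hle))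
  have card_insert := Set.ncard_insert_of_notMem new_orb fin
  have card_mono := Set.ncard_le_ncard subset fin'
  have least := hE.le hgood
  unfold RelatorWord.complexity at least
  rcases hE.1.toIsLineRel.orb_nonTop_addLink hline with h | ⟨m, hm, hmab, h⟩ <;> rw [← hE'] at h
  · have := Set.ncard_le_ncard h hE.1.finite_nonTop
    omega
  · have card_nonTop := (Set.ncard_le_ncard h (hE.1.finite_nonTop.insert _)).trans
      (Set.ncard_insert_le _ _)
    have cells_eq := Set.eq_of_subset_of_ncard_le subset (by omega) fin'
    have complexity_le : W.complexity t L E' ≤ W.complexity t L E := by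
      unfold RelatorWord.complexity; omega
    refine ⟨⟨hgood, fun F hF _ => complexity_le.trans (hE.le hF)⟩, ⟨m, hm, hmab⟩, hgE',
      fun x hx => ?_⟩
    have hx' : orb L x ∈ insert (orb L g) (orb L '' W.cells t E) := cells_eq ▸ ⟨x, hx, rfl⟩
    rcases hx' with h | h
    · exact Or.inr (orb_eq_iff.1 h.symm)
    · exact Or.inl ((orb_mem_image_iff fun l hl x =>
        W.mul_mem_cells_iff hE.1.toIsLineRel hl).1 h)

end Complexity

section Labelings

variable {G : Type u} {Λ : Type*} [Group Λ]

/-- A function on `G` of which only the differences `(f p)⁻¹ * f q` between points related by `rel`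
are relevant. -/
structure Labeling (G Λ : Type*) where
  rel : Setoid G
  toFun : G → Λ

/-- `a ≤ b` if `b` relates more points and has the same differences as `a` where both are
defined. -/
instance : Preorder (Labeling G Λ) where
  le a b := a.rel ≤ b.rel ∧
    ∀ p q, a.rel p q → (b.toFun p)⁻¹ * b.toFun q = (a.toFun p)⁻¹ * a.toFun q
  le_refl a := ⟨le_rfl, fun _ _ _ => rfl⟩
  le_trans a b c hab hbc := ⟨hab.1.trans hbc.1, fun p q h =>
    (hbc.2 p q (hab.1 h)).trans (hab.2 p q h)⟩

open Filter in
theorem Labeling.exists_limit {a : ℕ → Labeling G Λ} (ha : Monotone a) :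
    ∃ b : Labeling G Λ, (∀ i, a i ≤ b) ∧ ∀ p q, b.rel p q → ∀ᶠ i in atTop, (a i).rel p q := by
  have eventually_rel : ∀ {i p q}, (a i).rel p q → ∀ᶠ k in atTop, (a k).rel p q :=
    fun {i p q} h => (eventually_ge_atTop i).mono fun k hk => (ha hk).1 h
  let S : Setoid G :=
    { r := fun p q => ∀ᶠ i in atTop, (a i).rel p q
      iseqv := ⟨fun p => .of_forall fun i => (a i).rel.refl' p,
        fun h => h.mono fun i hi => (a i).rel.symm' hi,
        fun h h' => (h.and h').mono fun i hi => (a i).rel.trans' hi.1 hi.2⟩ }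
  let rep : G → G := fun p => (Quotient.mk S p).out
  have difference_eventually_const :
      ∀ p, ∃ v, ∀ᶠ i in atTop, ((a i).toFun (rep p))⁻¹ * (a i).toFun p = v := fun p => by
    obtain ⟨i, hi⟩ := (Quotient.mk_out (s := S) p : ∀ᶠ i in atTop, (a i).rel (rep p) p).exists
    exact ⟨_, (eventually_ge_atTop i).mono fun k hk => (ha hk).2 _ _ hi⟩
  choose v hv using difference_eventually_const
  refine ⟨⟨S, v⟩, fun i => ⟨fun _ _ h => eventually_rel h, fun p q h => ?_⟩, fun _ _ h => h⟩
  have hrep : rep p = rep q := congrArg Quotient.out (Quotient.sound (s := S) (eventually_rel h))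
  obtain ⟨k, hp, hq, hik⟩ := ((hv p).and ((hv q).and (eventually_ge_atTop i))).exists
  simp only [← hp, ← hq, hrep, ← (ha hik).2 p q h]
  group

open Filter in
theorem exists_monotone_seq {α ι : Type*} [Preorder α] [Countable ι] [Nonempty ι]
    {Q : ι → α → α → Prop} (step : ∀ i a, ∃ b, a ≤ b ∧ Q i a b) (a₀ : α) :
    ∃ s : ℕ → α, s 0 = a₀ ∧ Monotone s ∧ ∀ i, ∃ᶠ n in atTop, Q i (s n) (s (n + 1)) := by
  choose next le_next next_spec using step
  obtain ⟨enum, henum⟩ := exists_surjective_nat ι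
  let s : ℕ → α := fun n => Nat.rec a₀ (fun n a => next (enum n.unpair.1) a) n
  refine ⟨s, rfl, monotone_nat_of_le_succ fun n => le_next _ _, fun i => ?_⟩
  obtain ⟨m, rfl⟩ := henum i
  refine frequently_atTop.2 fun n => ⟨Nat.pair m n, Nat.right_le_pair m n, ?_⟩
  have s_succ : s (Nat.pair m n + 1) = next (enum (Nat.pair m n).unpair.1) (s (Nat.pair m n)) := rfl
  rw [s_succ, Nat.unpair_pair]
  exact next_spec _ _

variable [Group G] {t : G} {L : Subgroup G} {B : Set G} {W : RelatorWord G}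

/-- The holonomy of the labeling is trivial around every cell of its relation. -/
def Labeling.IsFlat (W : RelatorWord G) (t : G) (a : Labeling G Λ) : Prop :=
  ∀ g ∈ W.cells t a.rel, W.holonomy t a.toFun g = 1

/-- No reading of `W` has exactly one power of `t` that is not joined by `E`. -/
def RelatorWord.ForcedClosed (W : RelatorWord G) (t : G) (E : Setoid G) : Prop :=
  ∀ g, ∀ j₀ < W.length, (∀ j < W.length, j ≠ j₀ → W.Joined t E g j) → W.Joined t E g j₀

theorem RelatorWord.exists_flat_jump (W : RelatorWord G) (t : G) (f : G → Λ) (g : G) {j₀ : ℕ}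
    (hj₀ : j₀ < W.length) :
    ∃ u : Λ, ∀ f' : G → Λ,
      (f' (W.tail t g j₀))⁻¹ * f' (W.head t g j₀) =
        (f (W.tail t g j₀))⁻¹ * u * f (W.head t g j₀) →
      (∀ j < W.length, j ≠ j₀ → (f' (W.tail t g j))⁻¹ * f' (W.head t g j) =
        (f (W.tail t g j))⁻¹ * f (W.head t g j)) →
      W.holonomy t f' g = 1 := by
  obtain ⟨z, hz⟩ := exists_prodRange_update_eq_one
    (fun j => (f (W.tail t g j))⁻¹ * f (W.head t g j)) hj₀
  refine ⟨f (W.tail t g j₀) * z * (f (W.head t g j₀))⁻¹, fun f' h₀ h => ?_⟩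
  refine (prodRange_congr fun j hj => ?_).trans hz
  rcases eq_or_ne j j₀ with rfl | hne
  · rw [h₀, Function.update_self]; group
  · rw [h j hj hne, Function.update_of_ne hne]

theorem Labeling.IsFlat.exists_extension_of_forced (ht : ¬IsOfFinOrder t) (hexp : W.exp 0 ≠ 0)
    {a : Labeling G Λ} (hmin : IsMinimalRel W t L B a.rel) (hflat : a.IsFlat W t) {g : G} {j₀ : ℕ}
    (hj₀ : j₀ < W.length) (hg : ∀ j < W.length, j ≠ j₀ → W.Joined t a.rel g j)
    (hg₀ : ¬W.Joined t a.rel g j₀) :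
    ∃ b : Labeling G Λ, a ≤ b ∧ IsMinimalRel W t L B b.rel ∧ b.IsFlat W t ∧
      g ∈ W.cells t b.rel := by
  obtain ⟨E, f⟩ := a
  have hE : IsLineRel t L E := hmin.1.toIsLineRel
  obtain ⟨hmin', ⟨m, hm, hmab⟩, hgE', hcells⟩ := hmin.addLink hexp hj₀ hg hg₀ rfl
  choose u hu using fun l => W.exists_flat_jump t f (l * g) hj₀
  obtain ⟨β, β_congr, hβ⟩ := hE.exists_jump ht (W.leftRel_tail_head t g j₀) hg₀ hm hmab u
  have differences : ∀ p q, E p q → (β p * f p)⁻¹ * (β q * f q) = (f p)⁻¹ * f q := fun p q h => by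
    rw [β_congr p q h]; group
  refine ⟨⟨addLink L E (W.tail t g j₀) (W.head t g j₀), fun p => β p * f p⟩,
    ⟨le_addLink .., differences⟩, hmin', fun x hx => ?_, hgE'⟩
  rcases hcells x hx with hx | ⟨l, hl, rfl⟩
  · exact (W.holonomy_congr hx differences).trans (hflat x hx)
  · refine hu l _ ?_ fun j hj hne =>
      differences _ _ ((W.joined_mul_left_iff hE hl).2 (hg j hj hne))
    rw [W.tail_mul_left, W.head_mul_left, ← hβ l hl]
    group

theorem Labeling.IsFlat.exists_forcedClosed [Countable G] (ht : ¬IsOfFinOrder t)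
    (hexp : W.exp 0 ≠ 0) {a : Labeling G Λ} (hmin : IsMinimalRel W t L B a.rel)
    (hflat : a.IsFlat W t) :
    ∃ b : Labeling G Λ, a ≤ b ∧ b.rel ≤ QuotientGroup.leftRel (Subgroup.zpowers t) ∧
      b.IsFlat W t ∧ W.ForcedClosed t b.rel := by
  have step : ∀ (x : G × ℕ) (a : {a : Labeling G Λ // IsMinimalRel W t L B a.rel ∧ a.IsFlat W t}),
      ∃ b, a ≤ b ∧ (x.2 < W.length → (∀ j < W.length, j ≠ x.2 → W.Joined t a.1.rel x.1 j) →
        W.Joined t b.1.rel x.1 x.2) := by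
    rintro ⟨g, j₀⟩ ⟨a, hmin, hflat⟩
    by_cases h : (∀ j < W.length, j ≠ j₀ → W.Joined t a.rel g j) ∧ ¬W.Joined t a.rel g j₀ ∧
      j₀ < W.length
    · obtain ⟨b, hab, hmin', hflat', hg⟩ := hflat.exists_extension_of_forced ht hexp hmin h.2.2 h.1
        h.2.1
      exact ⟨⟨b, hmin', hflat'⟩, hab, fun hj _ => hg _ hj⟩
    · exact ⟨_, le_rfl, by tauto⟩
  obtain ⟨s, hs₀, s_mono, hs⟩ := exists_monotone_seq step ⟨a, hmin, hflat⟩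
  obtain ⟨b, hsb, hb⟩ := Labeling.exists_limit (a := fun i => (s i).1) s_mono
  refine ⟨b, by simpa only [hs₀] using hsb 0, fun p q h => ?_, fun g hg => ?_,
    fun g j₀ hj₀ hg => ?_⟩
  · obtain ⟨i, hi⟩ := (hb p q h).exists
    exact (s i).2.1.1.le_leftRel hi
  · obtain ⟨i, hi⟩ := ((Finset.range W.length).eventually_all.2 fun j hj =>
      hb _ _ (hg j (Finset.mem_range.1 hj))).exists
    have hgi : g ∈ W.cells t (s i).1.rel := fun j hj => hi j (Finset.mem_range.2 hj)
    exact (W.holonomy_congr hgi (hsb i).2).trans ((s i).2.2 g hgi)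
  · have eventually_joined := ((Finset.range W.length).filter (· ≠ j₀)).eventually_all.2 fun j hj =>
      hb _ _ (hg j (Finset.mem_range.1 (Finset.mem_filter.1 hj).1) (Finset.mem_filter.1 hj).2)
    obtain ⟨i, hi, hi'⟩ := ((hs (g, j₀)).and_eventually eventually_joined).exists
    exact (hsb (i + 1)).1 (hi hj₀ fun j hj hne =>
      hi' j (Finset.mem_filter.2 ⟨Finset.mem_range.2 hj, hne⟩))

end Labelings

namespace RelatorWord

variable {A B : Type*} [Group A] [Group B] {G : Type u} [Group G]

/-- The image of a word under a homomorphism of coefficient groups. -/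
def map (W : RelatorWord A) (α : A →* B) : RelatorWord B := ⟨W.exp, α ∘ W.coeff, W.length⟩

theorem map_tail (W : RelatorWord A) (α : A →* B) (t g : A) (j : ℕ) :
    α (W.tail t g j) = (W.map α).tail (α t) (α g) j := by
  simp only [tail, map, map_mul, map_prodRange, map_zpow, Function.comp_apply]

/-- The triple `(G, ι, t)` has the universal property of the quotient of the free product of `A` and
`⟨t⟩` by the normal closure of `W`. -/
structure Presents (W : RelatorWord A) (ι : A →* G) (t : G) : Prop where
  relation : (W.map ι).tail t 1 W.length = 1
  exists_lift : ∀ {M : Type u} [Group M] (α : A →* M) (T : M), (W.map α).tail T 1 W.length = 1 →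
    ∃ φ : G →* M, φ t = T ∧ φ.comp ι = α
  closure_eq_top : Subgroup.closure (insert t (Set.range ι)) = ⊤

/-- A word is periodic if its exponents and its coefficients are. -/
structure IsPeriodic (W : RelatorWord A) (k : ℕ) : Prop where
  exp : Function.Periodic W.exp k
  coeff : Function.Periodic W.coeff k

namespace IsPeriodic

variable {W : RelatorWord A} {k : ℕ}

protected theorem map (hW : W.IsPeriodic k) (α : A →* B) : (W.map α).IsPeriodic k :=
  ⟨hW.exp, hW.coeff.comp α⟩

protected theorem mul {X : Type*} {W : RelatorWord X} (hW : W.IsPeriodic k) (n : ℕ) :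
    W.IsPeriodic (k * n) :=
  mul_comm k n ▸ ⟨hW.exp.nat_mul n, hW.coeff.nat_mul n⟩

theorem tail_add (hW : W.IsPeriodic k) (t g : A) (j : ℕ) :
    W.tail t g (k + j) = W.tail t (W.tail t g k) j := by
  simp only [tail, prodRange_add, mul_assoc]
  simp only [add_comm k, hW.exp _, hW.coeff _]

theorem head_add (hW : W.IsPeriodic k) (t g : A) (j : ℕ) :
    W.head t g (k + j) = W.head t (W.tail t g k) j := by
  rw [head, head, hW.tail_add, add_comm k, hW.exp]

protected theorem tail_mul (hW : W.IsPeriodic k) (t : A) (N : ℕ) :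
    W.tail t 1 (k * N) = W.tail t 1 k ^ N := by
  rw [tail, tail, one_mul, one_mul]
  exact prodRange_periodic_mul (fun j => by simp only [hW.exp j, hW.coeff j]) N

end IsPeriodic

end RelatorWord

section Coloring

theorem exists_equiv_over {C X : Type u} {p : C → X} (hp : Function.Surjective p) :
    ∃ e : C × (ℕ → C) ≃ X × (ℕ → C), ∀ ω, (e ω).1 = p ω.1 := by
  have fiber_equiv : ∀ x, Nonempty ({c // p c = x} × (ℕ → C) ≃ (ℕ → C)) := fun x => by
    obtain ⟨c, hc⟩ := hp x
    let cons : {c // p c = x} × (ℕ → C) → ℕ → C := fun ω n => Nat.casesOn n ω.1.1 ω.2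
    have cons_injective : Function.Injective cons := fun ω ω' h =>
      Prod.ext (Subtype.ext (congrFun h 0)) (funext fun n => congrFun h (n + 1))
    obtain ⟨e, he⟩ := Function.Embedding.schroeder_bernstein cons_injective
      (Prod.mk_right_injective (⟨c, hc⟩ : {c // p c = x}))
    exact ⟨.ofBijective e he⟩
  exact ⟨(((Equiv.sigmaFiberEquiv p).symm.prodCongr (Equiv.refl _)).trans
    (Equiv.sigmaProdDistrib _ _)).trans
    ((Equiv.sigmaCongrRight fun x => (fiber_equiv x).some).trans (Equiv.sigmaEquivProd _ _)),
    fun ω => rfl⟩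

theorem exists_periodic_equiv_over {C X : Type u} {k N : ℕ} (hk : 0 < k) {rot : Equiv.Perm C}
    (hrot : rot ^ N = 1) {p : ℕ → C → X} (hp : ∀ j < k, Function.Surjective (p j))
    (p_add : ∀ j c, p (k + j) c = p j (rot c)) :
    ∃ ψ : ℕ → C × (ℕ → C) ≃ X × (ℕ → C), (∀ j ω, (ψ j ω).1 = p j ω.1) ∧
      (∀ j, ψ (k + j) = (rot.prodCongr (Equiv.refl _)).trans (ψ j)) ∧ ψ (k * N) = ψ 0 := by
  choose ψ₀ hψ₀ using fun j => exists_equiv_over (hp (j % k) (Nat.mod_lt j hk))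
  have p_div : ∀ a j c, p (k * a + j) c = p j ((rot ^ a) c) := fun a => by
    induction a with
    | zero => simp
    | succ a ih =>
      intro j c
      rw [Nat.mul_succ, add_assoc, ih, p_add, pow_succ', Equiv.Perm.mul_apply]
  refine ⟨fun j => ((rot ^ (j / k)).prodCongr (Equiv.refl _)).trans (ψ₀ (j % k)), fun j ω => ?_,
    fun j => ?_, ?_⟩
  · refine (hψ₀ _ _).trans ?_
    conv_rhs => rw [← Nat.div_add_mod j k, p_div]
    rw [Nat.mod_mod]; rfl
  · beta_reduce
    rw [Nat.add_div_left j hk, Nat.add_mod_left, pow_succ]; rfl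
  · beta_reduce
    rw [Nat.mul_div_cancel_left N hk, Nat.mul_mod_right, Nat.zero_mod, Nat.zero_div, pow_zero, hrot]

/-- The pairs of a permutation of `Ω` and an element of `K` that act compatibly on `K` through
`f`, the element by the inverse of right translation. -/
def translationSubgroup {K Ω : Type*} [Group K] (f : Ω → K) : Subgroup (Equiv.Perm Ω × K) where
  carrier := {x | ∀ ω, f (x.1 ω) = f ω * x.2⁻¹}
  one_mem' := fun ω => by simp
  mul_mem' := fun {x y} hx hy ω => by
    change f (x.1 (y.1 ω)) = f ω * (x.2 * y.2)⁻¹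
    rw [hx, hy, mul_inv_rev, mul_assoc]
  inv_mem' := fun {x} hx ω => by
    have h := hx (x.1⁻¹ ω)
    rw [← Equiv.Perm.mul_apply, mul_inv_cancel, Equiv.Perm.one_apply] at h
    change f (x.1⁻¹ ω) = f ω * x.2⁻¹⁻¹
    rw [h]; group

theorem apply_mul_zpow {K D : Type*} [Group K] {τ : K} {s : K → D} (hs : ∀ p, s (p * τ) = s p)
    (p : K) (m : ℤ) : s (p * τ ^ m) = s p := by
  induction m using Int.induction_on with
  | zero => rw [zpow_zero, mul_one]
  | succ m ih => rw [zpow_add_one, ← mul_assoc, hs, ih]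
  | pred m ih => rw [← ih, ← hs (p * τ ^ (-m - 1 : ℤ)), mul_assoc, ← zpow_add_one, sub_add_cancel]

/-- The word `(t ^ e 0 * x₀ * ⋯ * t ^ e (k - 1) * xₖ₋₁) ^ N` whose coefficients form a basis of a
free group. -/
def freeWord (k N : ℕ) [NeZero k] (e : ℕ → ℤ) : RelatorWord (FreeGroup (Fin k)) :=
  ⟨e, fun j => .of (Fin.ofNat k j), k * N⟩

variable {k N : ℕ} [NeZero k] {e : ℕ → ℤ}

theorem freeWord_isPeriodic (he : Function.Periodic e k) : (freeWord k N e).IsPeriodic k :=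
  ⟨he, fun j => congrArg FreeGroup.of (Fin.ext (Nat.add_mod_right j k))⟩

theorem freeWord_map_lift {M : Type*} [Group M] {x : ℕ → M} (hx : Function.Periodic x k) :
    (freeWord k N e).map (FreeGroup.lift fun i : Fin k => x i) = ⟨e, x, k * N⟩ := by
  simp only [RelatorWord.map, freeWord, RelatorWord.mk.injEq, true_and, and_true]
  funext j
  exact (FreeGroup.lift_apply_of ..).trans (hx.map_mod_nat j)

namespace RelatorWord.Presents

variable {K : Type u} [Group K] {ι : FreeGroup (Fin k) →* K} {τ : K}

theorem closure_freeWord (hK : (freeWord k N e).Presents ι τ) :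
    Subgroup.closure (insert τ (Set.range ((freeWord k N e).map ι).coeff)) = ⊤ := by
  set S := Subgroup.closure (insert τ (Set.range ((freeWord k N e).map ι).coeff))
  have range_of_le : Subgroup.closure (Set.range FreeGroup.of) ≤ S.comap ι := by
    rw [Subgroup.closure_le]
    rintro _ ⟨i, rfl⟩
    refine Subgroup.subset_closure (.inr ⟨i, congrArg (ι ∘ FreeGroup.of) (Fin.cast_val_eq_self i)⟩)
  rw [FreeGroup.closure_range_of] at range_of_le
  rw [← top_le_iff, ← hK.closure_eq_top, Subgroup.closure_le]
  rintro _ (rfl | ⟨x, rfl⟩)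
  · exact Subgroup.subset_closure (.inl rfl)
  · exact range_of_le (Subgroup.mem_top x)

theorem exists_lift_tail (hK : (freeWord k N e).Presents ι τ) (he : Function.Periodic e k)
    {M : Type u} [Group M] (T : M) {v : ℕ → M} (v_add : ∀ j, v (k + j) = v k * v j)
    (v_zero : v 0 = 1) (v_end : v (k * N) = 1) :
    ∃ φ : K →* M, φ τ = T ∧ ∀ j, φ (((freeWord k N e).map ι).tail τ 1 j) = v j := by
  let X : ℕ → M := fun j => (T ^ e j)⁻¹ * ((v j)⁻¹ * v (j + 1))
  have X_periodic : Function.Periodic X k := fun j => by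
    have he' : e (k + j) = e j := by rw [add_comm, he]
    simp only [X, add_comm j k, add_assoc, v_add, he']; group
  have tail_eq : ∀ j, (⟨e, X, k * N⟩ : RelatorWord M).tail T 1 j = v j := fun j => by
    simp only [tail, X, mul_inv_cancel_left, prodRange_telescope, v_zero, inv_one, one_mul]
  obtain ⟨φ, rfl, hφ⟩ := hK.exists_lift (FreeGroup.lift fun i : Fin k => X i) T (by
    rw [freeWord_map_lift X_periodic]
    exact (tail_eq _).trans v_end)
  refine ⟨φ, rfl, fun j => ?_⟩
  rw [← tail_eq j, ← freeWord_map_lift X_periodic, ← hφ, map_tail, map_one]; rfl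

theorem exists_perm_representation (hK : (freeWord k N e).Presents ι τ)
    (he : Function.Periodic e k) {Z Ω : Type u} {f : Ω → K} {T : Equiv.Perm Ω}
    (hT : ∀ ω, f (T ω) = f ω * τ) {R : Equiv.Perm Z} {ψ : ℕ → Z ≃ Ω}
    (hψ : ∀ j z, f (ψ j z) = f (ψ 0 z) * ((freeWord k N e).map ι).tail τ 1 j)
    (ψ_add : ∀ j, ψ (k + j) = R.trans (ψ j)) (ψ_end : ψ (k * N) = ψ 0) :
    ∃ φ : K →* Equiv.Perm Ω, φ τ = T⁻¹ ∧ (∀ κ ω, f (φ κ ω) = f ω * κ⁻¹) ∧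
      ∀ j z, φ (((freeWord k N e).map ι).tail τ 1 j)⁻¹ (ψ 0 z) = ψ j z := by
  set W := (freeWord k N e).map ι
  let v : ℕ → Equiv.Perm Ω := fun j => (ψ j).symm.trans (ψ 0)
  obtain ⟨φ, φ_τ, φ_tail⟩ := hK.exists_lift_tail he T⁻¹ (v := v)
    (fun j => Equiv.ext fun ω => by
      have ψ_k : ψ k = R.trans (ψ 0) := ψ_add 0
      simp [v, ψ_add, ψ_k])
    (Equiv.self_trans_symm _) (by simp only [v, ψ_end, Equiv.symm_trans_self]; rfl)
  refine ⟨φ, φ_τ, fun κ => ?_, fun j z => ?_⟩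
  · let S := (translationSubgroup f).comap (φ.prod (MonoidHom.id K))
    have τ_mem : τ ∈ S := fun ω => by
      change f (φ τ ω) = f ω * τ⁻¹
      rw [φ_τ, eq_mul_inv_iff_mul_eq, ← hT, ← Equiv.Perm.mul_apply, mul_inv_cancel]; rfl
    have tail_mem : ∀ j, W.tail τ 1 j ∈ S := fun j ω => by
      obtain ⟨z, rfl⟩ := (ψ j).surjective ω
      change f (φ (W.tail τ 1 j) _) = f _ * (W.tail τ 1 j)⁻¹
      rw [φ_tail, hψ, mul_inv_cancel_right]
      simp [v]
    have coeff_mem : ∀ j, W.coeff j ∈ S := fun j => by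
      rw [← inv_mul_cancel_left (W.head τ 1 j) (W.coeff j), ← W.tail_succ]
      exact mul_mem (inv_mem (mul_mem (tail_mem j) (zpow_mem τ_mem _))) (tail_mem _)
    have closure_le : Subgroup.closure (insert τ (Set.range W.coeff)) ≤ S :=
      (Subgroup.closure_le S).2 (Set.insert_subset τ_mem (Set.range_subset_iff.2 coeff_mem))
    exact closure_le (hK.closure_freeWord ▸ Subgroup.mem_top κ)
  · rw [map_inv, φ_tail, Equiv.Perm.inv_eq_iff_eq]
    simp [v]

theorem exists_coloring (hK : (freeWord k N e).Presents ι τ) (he : Function.Periodic e k)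
    {C D : Type u} [Nonempty D] {rot : Equiv.Perm C} (hrot : rot ^ N = 1)
    {base : C → K} {color : C → ℕ → D}
    (base_rot : ∀ c, base (rot c) = ((freeWord k N e).map ι).tail τ (base c) k)
    (color_rot : ∀ c j, color (rot c) j = color c (k + j))
    (exists_color : ∀ g, ∀ j < k, ∀ s, ∃ c, base c = g ∧ color c j = s) :
    ∃ s : K → D, (∀ p (m : ℤ), s (p * τ ^ m) = s p) ∧
      ∀ g, ∃ c, base c = g ∧ ∀ j, color c j = s (((freeWord k N e).map ι).tail τ g j) := by
  set W := (freeWord k N e).map ι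
  have hW : W.IsPeriodic k := (freeWord_isPeriodic he).map ι
  have tail_eq : ∀ g j, W.tail τ g j = g * W.tail τ 1 j := fun g j => by
    rw [← W.tail_mul_left, mul_one]
  let p : ℕ → C → K × D := fun j c => (W.tail τ (base c) j, color c j)
  have p_surjective : ∀ j < k, Function.Surjective (p j) := fun j hj ⟨g, s⟩ => by
    obtain ⟨c, hc, rfl⟩ := exists_color (g * (W.tail τ 1 j)⁻¹) j hj s
    exact ⟨c, Prod.ext (by rw [← inv_mul_cancel_right g (W.tail τ 1 j), ← tail_eq, ← hc]) rfl⟩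
  obtain ⟨ψ, ψ_fst, ψ_add, ψ_end⟩ := exists_periodic_equiv_over (NeZero.pos k) hrot p_surjective
    fun j c => by simp only [p, base_rot, color_rot, hW.tail_add]
  let T : Equiv.Perm ((K × D) × (ℕ → C)) :=
    ((Equiv.mulRight τ).prodCongr (Equiv.refl D)).prodCongr (Equiv.refl (ℕ → C))
  obtain ⟨φ, φ_τ, φ_fst, φ_tail⟩ := hK.exists_perm_representation he (f := fun ω => ω.1.1) (T := T)
    (fun _ => rfl) (fun j z => by simpa only [ψ_fst, p, tail_zero] using tail_eq _ j) ψ_add ψ_end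
  obtain ⟨c₀, -⟩ := exists_color 1 0 (NeZero.pos k) (Classical.arbitrary D)
  let ω : K → (K × D) × (ℕ → C) := fun κ => φ κ⁻¹ ((1, Classical.arbitrary D), fun _ => c₀)
  have ω_fst : ∀ κ, (ω κ).1.1 = κ := fun κ => by simp only [ω, φ_fst, inv_inv, one_mul]
  have ω_mul : ∀ κ κ', ω (κ * κ') = φ κ'⁻¹ (ω κ) := fun κ κ' => by
    simp only [ω, mul_inv_rev, map_mul, Equiv.Perm.mul_apply]
  let s : K → D := fun κ => (ω κ).1.2
  have ω_mul_τ : ∀ κ, s (κ * τ) = s κ := fun κ => by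
    simp only [s]; rw [ω_mul, map_inv, φ_τ, inv_inv]; rfl
  refine ⟨s, apply_mul_zpow ω_mul_τ, fun g => ?_⟩
  obtain ⟨z, hz⟩ := (ψ 0).surjective (ω g)
  have ω_tail : ∀ j, (ω (W.tail τ g j)).1 = p j z.1 := fun j => by
    rw [tail_eq, ω_mul, ← hz, φ_tail, ψ_fst]
  refine ⟨z.1, ?_, fun j => (congrArg Prod.snd (ω_tail j)).symm⟩
  simpa only [tail_zero, ω_fst, p] using (congrArg Prod.fst (ω_tail 0)).symm

end RelatorWord.Presents

end Coloring

theorem exists_perm_pow_eq_one {C : Type*} {f : C → C} {N : ℕ} (hN : 0 < N)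
    (hf : f^[N] = id) : ∃ R : Equiv.Perm C, (∀ c, R c = f c) ∧ R ^ N = 1 := by
  have bijective : Function.Bijective f := by
    obtain ⟨n, rfl⟩ := Nat.exists_eq_succ_of_ne_zero hN.ne'
    refine ⟨.of_comp (f := f^[n]) ?_, .of_comp (g := f^[n]) ?_⟩
    · rw [← Function.iterate_succ, hf]; exact Function.injective_id
    · rw [← Function.iterate_succ', hf]; exact Function.surjective_id
  refine ⟨.ofBijective f bijective, fun _ => rfl, Equiv.ext fun c => ?_⟩
  rw [← Equiv.Perm.iterate_eq_pow]
  exact congrFun hf c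

section Patterns

variable {G Λ : Type u} [Group G] [Group Λ] {W : RelatorWord G} {t : G} {a : Labeling G Λ}

namespace Labeling

/-- The functions with the same differences as `a` between related points. -/
def Extension (a : Labeling G Λ) : Type u :=
  {s : G → Λ // ∀ p q, a.rel p q → (s p)⁻¹ * s q = (a.toFun p)⁻¹ * a.toFun q}

/-- A cyclic choice of one extension for each power of `t` in `W`, read from `g`, with trivial
holonomy. -/
def IsPattern (a : Labeling G Λ) (W : RelatorWord G) (t g : G) (c : ℕ → a.Extension) : Prop :=
  Function.Periodic c W.length ∧
    prodRange (fun j => ((c j).1 (W.tail t g j))⁻¹ * (c j).1 (W.head t g j)) W.length = 1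

theorem IsPattern.shift {k : ℕ} (hW : W.IsPeriodic k) (hlen : W.IsPeriodic W.length) {g : G}
    (hg : W.tail t g W.length = g) {c : ℕ → a.Extension} (hc : a.IsPattern W t g c) :
    a.IsPattern W t (W.tail t g k) fun j => c (k + j) := by
  refine ⟨fun j => by beta_reduce; rw [← add_assoc, hc.1], ?_⟩
  simp only [← hW.tail_add, ← hW.head_add]
  refine prodRange_shift_eq_one
    (v := fun j => ((c j).1 (W.tail t g j))⁻¹ * (c j).1 (W.head t g j)) (fun j => ?_) hc.2 k
  simp only [hc.1 j]
  rw [add_comm, hlen.tail_add, hlen.head_add, hg]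

theorem exists_extension_difference_eq {X : Type u} {a : Labeling X Λ} {p q : X}
    (hpq : ¬a.rel p q) (s : a.Extension) (z : Λ) :
    ∃ s' : a.Extension, (s'.1 p)⁻¹ * s'.1 q = z := by
  classical
  let β : X → Λ := fun x => if a.rel x q then s.1 p * z * (s.1 q)⁻¹ else 1
  have β_congr : ∀ x y, a.rel x y → β x = β y := fun x y h => by
    have : a.rel x q ↔ a.rel y q := ⟨a.rel.trans' (a.rel.symm' h), a.rel.trans' h⟩
    simp only [β, this]
  refine ⟨⟨fun x => β x * s.1 x, fun x y h => ?_⟩, ?_⟩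
  · change (β x * s.1 x)⁻¹ * (β y * s.1 y) = _
    rw [← s.2 x y h, β_congr x y h]; group
  · simp only [β, if_neg hpq, if_pos (a.rel.refl' q)]; group

theorem IsFlat.exists_isPattern (hflat : a.IsFlat W t) (hforced : W.ForcedClosed t a.rel) (g : G)
    {j₀ : ℕ} (hj₀ : j₀ < W.length) (s : a.Extension) :
    ∃ c, a.IsPattern W t g c ∧ c j₀ = s := by
  by_cases h : ∀ j < W.length, j ≠ j₀ → W.Joined t a.rel g j
  · have hg : g ∈ W.cells t a.rel := fun j hj =>
      (eq_or_ne j j₀).elim (fun h' => h' ▸ hforced g j₀ hj₀ h) (h j hj)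
    exact ⟨fun _ => s, ⟨fun _ => rfl, (W.holonomy_congr hg s.2).trans (hflat g hg)⟩, rfl⟩
  · push Not at h
    obtain ⟨j₁, hj₁, hne, not_joined⟩ := h
    obtain ⟨z, hz⟩ := exists_prodRange_update_eq_one
      (fun j => (s.1 (W.tail t g j))⁻¹ * s.1 (W.head t g j)) hj₁
    obtain ⟨s', hs'⟩ := exists_extension_difference_eq not_joined s z
    refine ⟨fun j => if j % W.length = j₁ then s' else s,
      ⟨fun j => by simp only [Nat.add_mod_right], (prodRange_congr fun j hj => ?_).trans hz⟩, ?_⟩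
    · rcases eq_or_ne j j₁ with rfl | hj₁
      · simp only [Nat.mod_eq_of_lt hj, if_true, hs', Function.update_self]
      · simp only [Nat.mod_eq_of_lt hj, if_neg hj₁, Function.update_of_ne hj₁]
    · simp only [Nat.mod_eq_of_lt hj₀, if_neg hne.symm]

variable {k N : ℕ} [NeZero k] {e : ℕ → ℤ} {K : Type u} [Group K] {ι : FreeGroup (Fin k) →* K}
  {τ : K} {i : K →* G}

/-- For each `κ` the functions `s (V.tail τ κ j)` are to form a pattern at `r * i κ`. All patterns
being admissible, this is an instance of `exists_coloring`. -/
theorem IsFlat.exists_pattern_coloring (hK : (freeWord k N e).Presents ι τ)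
    (he : Function.Periodic e k) (hN : 0 < N)
    (hflat : a.IsFlat ((freeWord k N e).map (i.comp ι)) (i τ))
    (hforced : ((freeWord k N e).map (i.comp ι)).ForcedClosed (i τ) a.rel) (r : G) :
    ∃ s : K → a.Extension, (∀ κ (m : ℤ), s (κ * τ ^ m) = s κ) ∧
      ∀ κ, a.IsPattern ((freeWord k N e).map (i.comp ι)) (i τ) (r * i κ)
        fun j => s (((freeWord k N e).map ι).tail τ κ j) := by
  set W := (freeWord k N e).map (i.comp ι)
  set V := (freeWord k N e).map ι
  have hk : ∀ {A : Type u} [Group A] (α : FreeGroup (Fin k) →* A),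
      ((freeWord k N e).map α).IsPeriodic k := fun α => (freeWord_isPeriodic he).map α
  have tail_end : ∀ κ, V.tail τ κ (k * N) = κ := fun κ => by
    rw [← mul_one κ, V.tail_mul_left]
    exact congrArg (κ * ·) hK.relation
  have W_tail : ∀ κ j, W.tail (i τ) (r * i κ) j = r * i (V.tail τ κ j) := fun κ j => by
    rw [V.map_tail, W.tail_mul_left]; rfl
  let C := {x : K × (ℕ → a.Extension) // a.IsPattern W (i τ) (r * i x.1) x.2}
  let f : C → C := fun c => ⟨(V.tail τ c.1.1 k, fun j => c.1.2 (k + j)), by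
    have := c.2.shift (hk _) ((hk _).mul N) ((W_tail _ _).trans (congrArg (r * i ·) (tail_end _)))
    rwa [W_tail] at this⟩
  have f_iterate : ∀ n (c : C), (f^[n] c).1 =
      (V.tail τ c.1.1 (k * n), fun j => c.1.2 (k * n + j)) := fun n => by
    induction n with
    | zero => simp
    | succ n ih =>
      intro c
      rw [Function.iterate_succ_apply, ih, Nat.mul_succ, add_comm (k * n) k, (hk _).tail_add]
      simp only [f, V, add_assoc]
  obtain ⟨rot, rot_apply, hrot⟩ := exists_perm_pow_eq_one (f := f) hN <| funext fun c =>
    Subtype.ext <| (f_iterate N c).trans <| Prod.ext (tail_end _) <| funext fun j => by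
      change c.1.2 (k * N + j) = c.1.2 j
      rw [add_comm]; exact c.2.1 j
  have : Nonempty a.Extension := ⟨⟨a.toFun, fun _ _ _ => rfl⟩⟩
  obtain ⟨s, s_mul, hs⟩ := hK.exists_coloring he hrot (base := fun c : C => c.1.1)
    (color := fun c => c.1.2) (fun c => by rw [rot_apply]) (fun c j => by rw [rot_apply])
    fun κ j hj s => by
      obtain ⟨c, hc, rfl⟩ := hflat.exists_isPattern hforced (r * i κ)
        (hj.trans_le (Nat.le_mul_of_pos_right k hN)) s
      exact ⟨⟨(κ, c), hc⟩, rfl, rfl⟩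
  refine ⟨s, s_mul, fun κ => ?_⟩
  obtain ⟨⟨⟨_, c⟩, hc⟩, rfl, h⟩ := hs κ
  rwa [← funext h]

theorem IsFlat.exists_extension (hK : (freeWord k N e).Presents ι τ)
    (he : Function.Periodic e k) (hN : 0 < N) (hi : Function.Injective i)
    (hrel : a.rel ≤ QuotientGroup.leftRel (Subgroup.zpowers (i τ)))
    (hflat : a.IsFlat ((freeWord k N e).map (i.comp ι)) (i τ))
    (hforced : ((freeWord k N e).map (i.comp ι)).ForcedClosed (i τ) a.rel) :
    ∃ σ : a.Extension, ∀ g, ((freeWord k N e).map (i.comp ι)).holonomy (i τ) σ.1 g = 1 := by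
  set W := (freeWord k N e).map (i.comp ι)
  set V := (freeWord k N e).map ι
  obtain ⟨rep, co, rep_mul, rep_mul_map, co_mul_map⟩ := exists_coset_rep hi
  choose s s_mul_zpow hs using hflat.exists_pattern_coloring hK he hN hforced
  let σ : G → a.Extension := fun g => s (rep g) (co g)
  have σ_mul : ∀ g κ, σ (g * i κ) = s (rep g) (co g * κ) := fun g κ => by
    simp only [σ, rep_mul_map, co_mul_map]
  have σ_mul_zpow : ∀ g (m : ℤ), σ (g * i τ ^ m) = σ g := fun g m => by
    rw [← map_zpow, σ_mul, s_mul_zpow]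
  have σ_tail : ∀ g j, σ (W.tail (i τ) g j) = s (rep g) (V.tail τ (co g) j) := fun g j => by
    have V_tail : i (V.tail τ 1 j) = W.tail (i τ) 1 j := by rw [V.map_tail, map_one]; rfl
    rw [← mul_one g, W.tail_mul_left, ← V_tail, σ_mul, ← V.tail_mul_left, mul_one, mul_one]
  refine ⟨⟨fun g => (σ g).1 g, fun p q h => ?_⟩, fun g => ?_⟩
  · obtain ⟨m, rfl⟩ := leftRel_zpowers_iff.1 (hrel h)
    beta_reduce
    rw [σ_mul_zpow]
    exact (σ p).2 _ _ h
  · refine (prodRange_congr fun j _ => ?_).trans (rep_mul g ▸ (hs (rep g) (co g)).2)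
    simp only [RelatorWord.head, σ_mul_zpow, σ_tail, W, V]

end Labeling

end Patterns

section Cocycles

open SemidirectProduct

variable {G Λ A : Type u} [Group G] [Group Λ] [Group A] {W : RelatorWord A} {ι : A →* G} {t : G}

namespace RelatorWord

theorem right_tail_map {α : A →* (G → Λ) ⋊[rightShift G Λ] G} (hα : rightHom.comp α = ι)
    (T : (G → Λ) ⋊[rightShift G Λ] G) (j : ℕ) :
    ((W.map α).tail T 1 j).right = (W.map ι).tail T.right 1 j := by
  rw [← hα]
  exact map_tail (W.map α) rightHom T 1 j

/-- Functions `h` and `f` on `G` with the same coboundary as `α` and `T` compare `W` read in the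
semidirect product to a holonomy. -/
theorem prodRange_mul_eq {α : A →* (G → Λ) ⋊[rightShift G Λ] G} (hα : rightHom.comp α = ι)
    {T : (G → Λ) ⋊[rightShift G Λ] G} {h f : G → Λ}
    (hh : ∀ a p, h (p * ι a) = h p * (α a).left p)
    (hf : ∀ (m : ℤ) p, f (p * T.right ^ m) = f p * (T ^ m).left p) (g : G) (j : ℕ) :
    prodRange (fun j => (f ((W.map ι).tail T.right g j) * (h ((W.map ι).tail T.right g j))⁻¹)⁻¹ *
        (f ((W.map ι).head T.right g j) * (h ((W.map ι).head T.right g j))⁻¹)) j *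
      h ((W.map ι).tail T.right g j) = h g * ((W.map α).tail T 1 j).left g := by
  induction j with
  | zero => simp
  | succ j ih =>
    have hg : g * ((W.map α).tail T 1 j).right = (W.map ι).tail T.right g j := by
      rw [right_tail_map hα, ← tail_mul_left, mul_one]
    have head_eq : (W.map ι).head T.right g j =
        g * (((W.map α).tail T 1 j).right * T.right ^ W.exp j) := by
      rw [head, ← hg, mul_assoc]; rfl
    have right_zpow : (T ^ W.exp j).right = T.right ^ W.exp j := map_zpow rightHom T _
    have h_succ : h ((W.map ι).tail T.right g (j + 1)) =
        h ((W.map ι).head T.right g j) * (α (W.coeff j)).left ((W.map ι).head T.right g j) := by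
      rw [tail_succ]; exact hh _ _
    have f_head : f ((W.map ι).head T.right g j) = f ((W.map ι).tail T.right g j) *
        (T ^ W.exp j).left ((W.map ι).tail T.right g j) := hf _ _
    have left_succ : ((W.map α).tail T 1 (j + 1)).left g = ((W.map α).tail T 1 j).left g *
        (T ^ W.exp j).left ((W.map ι).tail T.right g j) *
        (α (W.coeff j)).left ((W.map ι).head T.right g j) := by
      rw [tail_succ, head_eq, ← hg, ← right_zpow]; rfl
    rw [prodRange_succ, h_succ, f_head, left_succ]
    simp only [← mul_assoc, ← ih]
    group

namespace Presents

theorem exists_translation (hW : W.Presents ι t) {σ : G → Λ}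
    (hσ : ∀ g, (W.map ι).holonomy t σ g = 1) :
    ∃ F : G → Λ, (∀ a p, F (p * ι a) = F p) ∧ ∀ p, F (p * t) = F p * ((σ p)⁻¹ * σ (p * t)) := by
  let T : (G → Λ) ⋊[rightShift G Λ] G := inl σ⁻¹ * inr t * inl σ
  have T_zpow : ∀ m : ℤ, (T ^ m).left = fun p => (σ p)⁻¹ * σ (p * t ^ m) := fun m => by
    have : T ^ m = inl σ⁻¹ * inr (t ^ m) * inl σ := by
      simpa [T] using
        (map_zpow (MulAut.conj (inl σ⁻¹ : (G → Λ) ⋊[rightShift G Λ] G)) (inr t) m).symm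
    rw [this]
    funext p
    simp only [mul_left, left_inl, left_inr, right_inl, mul_right, right_inr, Pi.mul_apply,
      Pi.inv_apply, map_one, one_mul, mul_one, rightShift_apply]
  have T_right : T.right = t := by simp [T]
  have left_tail : ∀ g j, prodRange
      (fun j => (σ ((W.map ι).tail t g j))⁻¹ * σ ((W.map ι).head t g j)) j =
        ((W.map (inr.comp ι)).tail T 1 j).left g := fun g j => by
    simpa [T_right, T_zpow] using prodRange_mul_eq (W := W) (ι := ι) (α := inr.comp ι) rfl (T := T)
      (h := 1) (f := σ) (by simp) (by simp [T_zpow, T_right]) g j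
  obtain ⟨φ, φ_t, φ_ι⟩ := hW.exists_lift (inr.comp ι) T <| by
    refine SemidirectProduct.ext (funext fun g => (left_tail g _).symm.trans (hσ g)) ?_
    rw [right_tail_map (ι := ι) rfl, T_right, hW.relation, one_right]
  have φ_right : rightHom.comp φ = MonoidHom.id G :=
      MonoidHom.eq_of_eqOn_dense hW.closure_eq_top <| by
    rintro _ (rfl | ⟨a, rfl⟩)
    · simp [φ_t, T]
    · simp [← MonoidHom.comp_apply φ ι, φ_ι]
  have φ_mul : ∀ p x, (φ (p * x)).left 1 = (φ p).left 1 * (φ x).left p := fun p x => by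
    have : (φ p).right = p := DFunLike.congr_fun φ_right p
    simp [this]
  refine ⟨fun g => (φ g).left 1, fun a p => ?_, fun p => ?_⟩ <;> beta_reduce
  · rw [φ_mul, ← MonoidHom.comp_apply φ ι, φ_ι]
    simp
  · rw [φ_mul, φ_t, ← zpow_one T, T_zpow, zpow_one]

end Presents

end RelatorWord

end Cocycles

section LiftData

open SemidirectProduct

variable {G Λ Λ' : Type u} [Group G] [Group Λ] [Group Λ'] {L : Subgroup G}

/-- Invariance of a function on `G` under left translation by the elements of `L`. -/
def IsLeftInvariant {X : Type*} (L : Subgroup G) (u : G → X) : Prop := ∀ l ∈ L, ∀ p, u (l * p) = u p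

theorem IsLeftInvariant.finite_image {X : Type*} {u : G → X} (hu : IsLeftInvariant L u) {S : Set G}
    (hS : (orb L '' S).Finite) : (u '' S).Finite := by
  let u' : Quotient (QuotientGroup.rightRel L) → X := Quotient.lift u fun a b hab => by
    obtain ⟨l, hl, rfl⟩ := orb_eq_iff.1 (Quotient.sound hab)
    exact (hu l hl a).symm
  have image_eq : u '' S = u' '' (orb L '' S) := (Set.image_image u' (orb L) S).symm
  exact image_eq ▸ hS.image u'

theorem exists_equivariant (L : Subgroup G) : ∃ s : G → L, ∀ (l : L) p, s (l * p) = l * s p := by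
  have div_mem : ∀ p, p * (orb L p).out⁻¹ ∈ L := fun p => by
    obtain ⟨l, hl, h⟩ := orb_eq_iff.1 (Quotient.out_eq (orb L p))
    exact eq_mul_inv_of_mul_eq h.symm ▸ hl
  refine ⟨fun p => ⟨_, div_mem p⟩, fun l p => Subtype.ext ?_⟩
  simp only [orb_mul_left l.2, Subgroup.coe_mul, mul_assoc]

/-- The elements over `g ∈ G` that are left `L`-invariant and lift, through `π`, the coboundary of
`f` along `g`. -/
def invariantLifts (L : Subgroup G) (π : Λ →* Λ') (f : G → Λ') :
    Subgroup ((G → Λ) ⋊[rightShift G Λ] G) where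
  carrier := {x | IsLeftInvariant L x.left ∧ ∀ p, π (x.left p) = (f p)⁻¹ * f (p * x.right)}
  one_mem' := ⟨fun _ _ _ => rfl, fun p => by simp⟩
  mul_mem' := fun {x y} hx hy => by
    refine ⟨fun l hl p => ?_, fun p => ?_⟩
    · simp only [mul_left, Pi.mul_apply, rightShift_apply, mul_assoc, hx.1 l hl, hy.1 l hl]
    · simp only [mul_left, mul_right, Pi.mul_apply, rightShift_apply, map_mul, hx.2, hy.2]
      group
  inv_mem' := fun {x} hx => by
    refine ⟨fun l hl p => ?_, fun p => ?_⟩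
    · simp only [inv_left, Pi.inv_apply, rightShift_apply, mul_assoc, hx.1 l hl]
    · rw [inv_left, rightShift_apply, Pi.inv_apply, map_inv, hx.2, inv_right]
      group

theorem exists_mem_invariantLifts {π : Λ →* Λ'} (hπ : Function.Surjective π) {f : G → Λ'}
    (hf : ∀ g, IsLeftInvariant L fun p => (f p)⁻¹ * f (p * g)) (g : G) :
    ∃ x : invariantLifts L π f, x.1.right = g := by
  choose lift lift_spec using hπ
  exact ⟨⟨⟨fun p => lift ((f p)⁻¹ * f (p * g)), g⟩, fun l hl p => congrArg lift (hf g l hl p),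
    fun p => lift_spec _⟩, rfl⟩

theorem RelatorWord.map_holonomy {Λ Λ' : Type*} [Group Λ] [Group Λ'] (W : RelatorWord G) {t : G}
    (φ : Λ →* Λ') (f : G → Λ) (g : G) :
    φ (W.holonomy t f g) = W.holonomy t (fun p => φ (f p)) g := by
  simp only [holonomy, map_prodRange, map_mul, map_inv]

theorem RelatorWord.map_holonomy_mul_inv {Λ Λ' : Type*} [Group Λ] [Group Λ'] (W : RelatorWord G)
    {t : G} {φ : Λ →* Λ'} {f f' : G → Λ} (h : ∀ p, φ (f p) = φ (f' p)) (g : G) :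
    φ (W.holonomy t (fun p => f p * (f' p)⁻¹) g) = 1 :=
  (W.map_holonomy φ _ g).trans <| prodRange_eq_one fun j _ => by
    simp only [map_mul, map_inv, h, mul_inv_cancel, inv_one, one_mul]

theorem RelatorWord.exists_lift_data {κ : Type u} {W : RelatorWord (FreeGroup κ)}
    {ι : FreeGroup κ →* G} (hι : Function.Injective ι) {t : G} (ht : ¬IsOfFinOrder t)
    (hrel : (W.map ι).tail t 1 W.length = 1) {π : Λ →* Λ'} (hπ : Function.Surjective π)
    {f : G → Λ'} (hf : ∀ g, IsLeftInvariant L fun p => (f p)⁻¹ * f (p * g)) :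
    ∃ h e : G → Λ, (∀ p, π (h p) = f p) ∧ (∀ p, π (e p) = f p) ∧
      (∀ a, IsLeftInvariant L fun p => (h p)⁻¹ * h (p * ι a)) ∧
      (IsLeftInvariant L fun p => (e p)⁻¹ * e (p * t)) ∧
      IsLeftInvariant L fun g =>
        (h g)⁻¹ * (W.map ι).holonomy t (fun p => e p * (h p)⁻¹) g * h g := by
  choose x x_right using exists_mem_invariantLifts hπ hf
  let α₀ := FreeGroup.lift fun i => x (ι (.of i))
  let α := (invariantLifts L π f).subtype.comp α₀
  have hα : rightHom.comp α = ι := FreeGroup.ext_hom _ _ fun i => by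
    simp [α, α₀, x_right]
  have α_right : ∀ a, (α a).right = ι a := DFunLike.congr_fun hα
  have α_mem : ∀ a, α a ∈ invariantLifts L π f := fun a => Subtype.prop _
  obtain ⟨h, π_h, h_mul⟩ := exists_lift_of_cocycle (β := α) (hα ▸ hι) hπ fun a => (α_mem a).2
  let T := (x t).1
  have T_right : T.right = t := x_right t
  obtain ⟨e, π_e, e_mul⟩ := exists_lift_of_cocycle (β := zpowersHom _ T)
    (injective_rightHom_comp_zpowersHom (T_right ▸ ht)) hπ
    fun m => ((invariantLifts L π f).zpow_mem (x t).2 _).2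
  have h_mul_ι : ∀ a p, h (p * ι a) = h p * (α a).left p := fun a p => α_right a ▸ h_mul a p
  have e_mul_zpow : ∀ (m : ℤ) p, e (p * T.right ^ m) = e p * (T ^ m).left p := fun m p => by
    exact map_zpow rightHom T m ▸ e_mul (.ofAdd m) p
  refine ⟨h, e, π_h, π_e, fun a => ?_, ?_, ?_⟩
  · simpa only [h_mul_ι, inv_mul_cancel_left] using (α_mem a).1
  · have := e_mul_zpow 1
    simp only [zpow_one, T_right] at this
    simpa only [this, inv_mul_cancel_left] using (x t).2.1
  · have tail_mem : (W.map α).tail T 1 W.length ∈ invariantLifts L π f :=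
      (map_tail (W.map α₀) (invariantLifts L π f).subtype (x t) 1 W.length) ▸ Subtype.prop _
    have tail_eq : ∀ g, (W.map ι).tail t g W.length = g := fun g => by
      rw [← mul_one g, tail_mul_left, hrel]
    convert tail_mem.1 using 2 with g
    have := prodRange_mul_eq (W := W) hα h_mul_ι e_mul_zpow g W.length
    rw [T_right, tail_eq] at this
    rw [mul_assoc, inv_mul_eq_iff_eq_mul]
    exact this

end LiftData

section Retract

variable {G L Λ : Type*} [Group G] [Group L] [Group Λ]

theorem isFinitelyPresented_of_retract [hΛ : Group.IsFinitelyPresented Λ] {π : Λ →* L}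
    {s : L →* Λ} (h : ∀ l, π (s l) = l) : Group.IsFinitelyPresented L := by
  obtain ⟨n, φ, hφ, -⟩ := hΛ.out
  let R : Set Λ := Set.range fun i : Fin n => (φ (.of i))⁻¹ * s (π (φ (.of i)))
  let q := QuotientGroup.mk' (Subgroup.normalClosure R)
  have q_retract : ((q.comp s).comp π).comp φ = q.comp φ := FreeGroup.ext_hom _ _ fun i =>
    have h_mem : _ ∈ Subgroup.normalClosure R := Subgroup.subset_normalClosure ⟨i, rfl⟩
    (QuotientGroup.eq.2 h_mem).symm
  have ker_le : π.ker ≤ Subgroup.normalClosure R := fun x hx => by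
    obtain ⟨y, rfl⟩ := hφ x
    rw [← QuotientGroup.eq_one_iff]
    refine (DFunLike.congr_fun q_retract y).symm.trans ?_
    simp only [MonoidHom.comp_apply, MonoidHom.mem_ker.1 hx, map_one]
  have le_ker : Subgroup.normalClosure R ≤ π.ker := by
    refine Subgroup.normalClosure_le_normal ?_
    rintro _ ⟨i, rfl⟩
    simp [MonoidHom.mem_ker, h]
  exact .of_surjective π (fun l => ⟨s l, h l⟩)
    ⟨R, Set.finite_range _, le_ker.antisymm ker_le⟩

theorem exists_isFinitelyPresented_quotient {Λ : Type u} [Group Λ] [Group.IsFinitelyPresented Λ]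
    {π : Λ →* L} {R : Set Λ} (hR : R.Finite) (h : ∀ x ∈ R, π x = 1) :
    ∃ (Λ' : Type u) (_ : Group Λ') (q : Λ →* Λ') (π' : Λ' →* L), Group.IsFinitelyPresented Λ' ∧
      (∀ x, π' (q x) = π x) ∧ ∀ x ∈ R, q x = 1 :=
  ⟨Λ ⧸ Subgroup.normalClosure R, inferInstance, QuotientGroup.mk' _,
    QuotientGroup.lift _ π (Subgroup.normalClosure_le_normal h), .quotient _ ⟨R, hR, rfl⟩,
    fun _ => rfl, fun _ hx => (QuotientGroup.eq_one_iff _).2 (Subgroup.subset_normalClosure hx)⟩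

theorem exists_section {L : Subgroup G} {S : Set L} (hS : Submonoid.closure S = ⊤) {π : Λ →* L}
    {θ : G → Λ} (hθ : ∀ (l : L) p, π (θ (l * p)) = l * π (θ p))
    (hconst : ∀ l : L, ∀ x ∈ S, θ (l * x) * (θ x)⁻¹ = θ l * (θ 1)⁻¹) :
    ∃ s : L →* Λ, ∀ l, π (s l) = l := by
  refine ⟨.ofClosureMEqTopRight (fun l => θ l * (θ 1)⁻¹) hS (by simp) fun l x hx => ?_, fun l => ?_⟩
  · rw [← hconst l x hx]
    simp [mul_assoc]
  · have hl := hθ l 1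
    rw [mul_one] at hl
    simp [hl]

/-- A finitely generated part of a group generated by `t` and the image of `ι` is connected in the
Cayley graph after removing all but finitely many of the edges labeled by `t`. -/
theorem exists_finite_links {A : Type*} [Group A] {ι : A →* G} {t : G}
    (hclosure : Subgroup.closure (insert t (Set.range ι)) = ⊤) {S : Set G} (hS : S.Finite) :
    ∃ B : Set G, B.Finite ∧ ∀ E : Setoid G, (∀ p a, E p (p * ι a)) → (∀ r ∈ B, E r (r * t)) →
      ∀ g ∈ S, E 1 g := by
  have links : ∀ g p : G, ∃ B : Set G, B.Finite ∧ ∀ E : Setoid G, (∀ p a, E p (p * ι a)) →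
      (∀ r ∈ B, E r (r * t)) → E p (p * g) := fun g => by
    induction hclosure ▸ Subgroup.mem_top g using Subgroup.closure_induction with
    | mem g hg =>
      rcases hg with rfl | ⟨a, rfl⟩
      · exact fun p => ⟨{p}, Set.finite_singleton p, fun E _ hB => hB p rfl⟩
      · exact fun p => ⟨∅, Set.finite_empty, fun E hι _ => hι p a⟩
    | one => exact fun p => ⟨∅, Set.finite_empty, fun E _ _ => by rw [mul_one]⟩
    | mul g g' _ _ ih ih' =>
      intro p
      obtain ⟨B, hB, h⟩ := ih p
      obtain ⟨B', hB', h'⟩ := ih' (p * g)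
      refine ⟨B ∪ B', hB.union hB', fun E hι hE => ?_⟩
      rw [← mul_assoc]
      exact E.trans' (h E hι fun r hr => hE r (.inl hr)) (h' E hι fun r hr => hE r (.inr hr))
    | inv g _ ih =>
      intro p
      obtain ⟨B, hB, h⟩ := ih (p * g⁻¹)
      refine ⟨B, hB, fun E hι hE => E.symm' ?_⟩
      simpa only [inv_mul_cancel_right] using h E hι hE
  choose B hB h using fun g => links g 1
  refine ⟨⋃ g ∈ S, B g, hS.biUnion fun g _ => hB g, fun E hι hE g hg => ?_⟩
  rw [← one_mul g]
  exact h g E hι fun r hr => hE r (Set.mem_biUnion hg hr)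

end Retract

section Coherence

variable {G K : Type u} [Group G] [Group K] {κ : Type u} {k N : ℕ} [NeZero k] {e : ℕ → ℤ}
  {β : FreeGroup (Fin k) →* FreeGroup κ} {ι : FreeGroup κ →* G} {ιK : FreeGroup (Fin k) →* K}
  {τ : K} {i : K →* G}

/-- `G` is the one-relator group of a power of a word whose coefficients are given by `β`, and it
contains the one-relator group `K` with independent coefficients. -/
structure IsWindmill (N : ℕ) (e : ℕ → ℤ) (β : FreeGroup (Fin k) →* FreeGroup κ)
    (ι : FreeGroup κ →* G) (ιK : FreeGroup (Fin k) →* K) (τ : K) (i : K →* G) : Prop where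
  presents : ((freeWord k N e).map β).Presents ι (i τ)
  presents_free : (freeWord k N e).Presents ιK τ
  comp_eq : ι.comp β = i.comp ιK
  injective : Function.Injective ι
  injective_free : Function.Injective i
  not_isOfFinOrder : ¬IsOfFinOrder (i τ)
  exp_periodic : Function.Periodic e k
  exp_ne_zero : e 0 ≠ 0
  pos : 0 < N

namespace IsWindmill

variable {Λ : Type u} [Group Λ] {L : Subgroup G} {B : Set G}

theorem exists_translation [Countable G] (H : IsWindmill N e β ι ιK τ i) {a : Labeling G Λ}
    (hmin : IsMinimalRel (((freeWord k N e).map β).map ι) (i τ) L B a.rel)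
    (hflat : a.IsFlat (((freeWord k N e).map β).map ι) (i τ)) :
    ∃ F : G → Λ, (∀ x p, F (p * ι x) = F p) ∧
      ∀ p, a.rel p (p * i τ) → F (p * i τ) = F p * ((a.toFun p)⁻¹ * a.toFun (p * i τ)) := by
  have map_eq : ((freeWord k N e).map β).map ι = (freeWord k N e).map (i.comp ιK) := by
    rw [← H.comp_eq]; rfl
  obtain ⟨b, hab, hrel, hflat', hforced⟩ :=
    hflat.exists_forcedClosed H.not_isOfFinOrder H.exp_ne_zero hmin
  rw [map_eq] at hflat' hforced
  obtain ⟨σ, hσ⟩ := hflat'.exists_extension H.presents_free H.exp_periodic H.pos H.injective_free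
    hrel hforced
  rw [← map_eq] at hσ
  obtain ⟨F, hF, hFt⟩ := H.presents.exists_translation hσ
  refine ⟨F, hF, fun p hp => ?_⟩
  rw [hFt, σ.2 _ _ (hab.1 hp), hab.2 _ _ hp]

theorem exists_twist [Countable G] (H : IsWindmill N e β ι ιK τ i) {E : Setoid G}
    (hmin : IsMinimalRel (((freeWord k N e).map β).map ι) (i τ) L B E) {Λ' : Type*} [Group Λ']
    {π : Λ →* Λ'} {h u : G → Λ} (hπ : ∀ p, π (u p) = π (h p))
    (hflat : ∀ g ∈ (((freeWord k N e).map β).map ι).cells (i τ) E,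
      (((freeWord k N e).map β).map ι).holonomy (i τ) (fun p => u p * (h p)⁻¹) g = 1) :
    ∃ θ : G → Λ, (∀ p, π (θ p) = π (h p)) ∧
      (∀ x p, (θ p)⁻¹ * θ (p * ι x) = (h p)⁻¹ * h (p * ι x)) ∧
      ∀ p, E p (p * i τ) → (θ p)⁻¹ * θ (p * i τ) = (u p)⁻¹ * u (p * i τ) := by
  let f : G → π.ker := fun p => ⟨u p * (h p)⁻¹, by
    rw [MonoidHom.mem_ker, map_mul, hπ, ← map_mul, mul_inv_cancel, map_one]⟩
  obtain ⟨F, hF, hFt⟩ := H.exists_translation (a := ⟨E, f⟩) hmin fun g hg =>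
    Subtype.ext (((RelatorWord.map_holonomy _ π.ker.subtype f g)).trans (hflat g hg))
  refine ⟨fun p => F p * h p, fun p => ?_, fun x p => ?_, fun p hp => ?_⟩ <;> beta_reduce
  · rw [map_mul, (F p).2, one_mul]
  · rw [hF]; group
  · rw [hFt p hp]
    simp only [f, Subgroup.coe_mul, Subgroup.coe_inv]
    group

theorem exists_finitelyPresented_cover [Countable G] (H : IsWindmill N e β ι ιK τ i)
    (hL : Group.FG L) (hB : B.Finite) :
    ∃ (Λ : Type u) (_ : Group Λ) (π : Λ →* L) (θ : G → Λ), Group.IsFinitelyPresented Λ ∧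
      (∀ (l : L) p, π (θ (l * p)) = l * π (θ p)) ∧
      (∀ x, IsLeftInvariant L fun p => (θ p)⁻¹ * θ (p * ι x)) ∧
      ∀ l ∈ L, ∀ r ∈ B,
        (θ (l * r))⁻¹ * θ (l * r * i τ) = (θ r)⁻¹ * θ (r * i τ) := by
  set W := ((freeWord k N e).map β).map ι
  obtain ⟨S, hS, π, hπ⟩ := Group.fg_iff_exists_freeGroup_hom_surjective.1 hL
  have := hS.to_subtype
  obtain ⟨s, hs⟩ := exists_equivariant L
  obtain ⟨h, u, π_h, π_u, h_inv, u_inv, hol_inv⟩ := RelatorWord.exists_lift_data (L := L)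
    H.injective H.not_isOfFinOrder H.presents.relation hπ (f := s) fun g l hl p => by
      have s_mul : ∀ p, s (l * p) = ⟨l, hl⟩ * s p := hs ⟨l, hl⟩
      simp only [mul_assoc, s_mul, mul_inv_rev, inv_mul_cancel_left]
  obtain ⟨E, hE⟩ := exists_minimalFor_of_wellFoundedLT _ (W.complexity (i τ) L)
    (exists_isGoodRel H.not_isOfFinOrder L hB)
  let R := (fun g => (h g)⁻¹ * W.holonomy (i τ) (fun p => u p * (h p)⁻¹) g * h g) ''
    W.cells (i τ) E
  have R_finite : R.Finite := hol_inv.finite_image (RelatorWord.finite_orb_cells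
    (mul_pos (NeZero.pos k) H.pos) H.exp_ne_zero hE.1.finite_nonTop).1
  have π_R : ∀ x ∈ R, π x = 1 := by
    rintro _ ⟨g, -, rfl⟩
    rw [map_mul, map_mul, map_inv, W.map_holonomy_mul_inv fun p => (π_u p).trans (π_h p).symm,
      mul_one, inv_mul_cancel]
  obtain ⟨Λ, _, q, π', hΛ, π'_q, q_R⟩ := exists_isFinitelyPresented_quotient R_finite π_R
  obtain ⟨θ, π_θ, θ_ι, θ_t⟩ := H.exists_twist hE (π := π') (h := q ∘ h) (u := q ∘ u)
    (fun p => by simp only [Function.comp_apply, π'_q, π_u, π_h]) fun g hg => by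
      have q_hol := q_R _ ⟨g, hg, rfl⟩
      rw [map_mul, map_mul, map_inv, W.map_holonomy, mul_assoc, inv_mul_eq_one, right_eq_mul]
        at q_hol
      simpa only [map_mul, map_inv, W, Function.comp_apply] using q_hol
  have hE_mul : ∀ l ∈ L, ∀ r ∈ B, E (l * r) (l * r * i τ) := fun l hl r hr => by
    rw [mul_assoc, hE.1.mul_left_iff hl]
    exact hE.1.rel_mul r hr
  refine ⟨Λ, _, π', θ, hΛ, fun l p => ?_, fun x l hl p => ?_, fun l hl r hr => ?_⟩
  · simp only [π_θ, Function.comp_apply, π'_q, π_h, hs]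
  · simp only [θ_ι]
    simpa only [Function.comp_apply, map_mul, map_inv] using congrArg q (h_inv x l hl p)
  · rw [θ_t _ (hE_mul l hl r hr), θ_t _ (hE.1.rel_mul r hr)]
    simpa only [Function.comp_apply, map_mul, map_inv] using congrArg q (u_inv l hl r)

theorem isFinitelyPresented_of_fg [Countable G] (H : IsWindmill N e β ι ιK τ i)
    (hL : Group.FG L) : Group.IsFinitelyPresented L := by
  obtain ⟨S, hS⟩ := Monoid.fg_def.1 (Group.fg_iff_monoid_fg.1 hL)
  obtain ⟨B, hB, hconn⟩ := exists_finite_links H.presents.closure_eq_top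
    (S.finite_toSet.image (Subtype.val : L → G))
  obtain ⟨Λ, _, π, θ, hΛ, π_θ, θ_ι, θ_t⟩ := H.exists_finitelyPresented_cover hL hB
  suffices hconst : ∀ l : L, ∀ x ∈ (S : Set L), θ (l * x) * (θ x)⁻¹ = θ l * (θ 1)⁻¹ by
    obtain ⟨s, hs⟩ := exists_section hS π_θ hconst
    exact isFinitelyPresented_of_retract hs
  intro l x hx
  have ratio_eq : ∀ a b c d : Λ, a⁻¹ * b = c⁻¹ * d → a * c⁻¹ = b * d⁻¹ :=
    fun a b c d h => by rw [inv_mul_eq_iff_eq_mul.1 h]; group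
  have := hconn (Setoid.ker fun p => θ (l * p) * (θ p)⁻¹) (fun p a => ?_) (fun r hr => ?_) x
    ⟨x, hx, rfl⟩
  · simpa using this.symm
  · refine ratio_eq _ _ _ _ ?_
    rw [← mul_assoc]
    exact θ_ι a l l.2 p
  · refine ratio_eq _ _ _ _ ?_
    rw [← mul_assoc]
    exact θ_t l l.2 r hr

end IsWindmill

end Coherence

section PingPong

variable {I : Type*}

open FreeGroup

theorem zpow_mul_mem_startsWith [DecidableEq I] {a : I} {w : I × Bool} (hw : w.1 ≠ a)
    {z : FreeGroup I} (hz : z ∈ startsWith w) {n : ℤ} (hn : n ≠ 0) :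
    ∃ b, of a ^ n * z ∈ startsWith (a, b) := by
  have pow_mem : ∀ b m, mk [(a, b)] ^ (m + 1) * z ∈ startsWith (a, b) := fun b m => by
    induction m with
    | zero =>
      rw [zero_add, pow_one]
      refine startsWith_mk_mul z ((startsWith.disjoint_iff_ne.2 ?_).notMem_of_mem_left hz)
      exact fun h => hw (congrArg Prod.fst h)
    | succ m ih =>
      rw [pow_succ', mul_assoc]
      exact startsWith_mk_mul _ ((startsWith.disjoint_iff_ne.2 (by simp)).notMem_of_mem_left ih)
  obtain ⟨m, rfl | rfl⟩ := n.eq_nat_or_neg <;>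
    obtain ⟨m, rfl⟩ := Nat.exists_eq_succ_of_ne_zero (n := m) (by simpa using hn)
  · exact ⟨true, by rw [zpow_natCast]; exact pow_mem true m⟩
  · exact ⟨false, by rw [zpow_neg, ← inv_zpow, zpow_natCast]; exact pow_mem false m⟩

theorem eq_zero_of_zpow_mul_mem_startsWith [DecidableEq I] {a : I} {w w' : I × Bool}
    (hw : w.1 ≠ a) (hw' : w'.1 ≠ a) {z : FreeGroup I} {n : ℤ} (hz : z ∈ startsWith w)
    (hz' : of a ^ n * z ∈ startsWith w') : n = 0 := by
  by_contra hn
  obtain ⟨b, hb⟩ := zpow_mul_mem_startsWith hw hz hn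
  refine (startsWith.disjoint_iff_ne.2 ?_).notMem_of_mem_left hb hz'
  exact fun h => hw' (congrArg Prod.fst h).symm

open scoped Pointwise in
theorem lift_zpow_mul_mul_inv_injective [Nontrivial I] {d : I → ℤ} (hd : ∀ i, d i ≠ 0) {σ : I → I}
    (hσ : Function.Injective σ) (hne : ∀ i, σ i ≠ i) :
    Function.Injective (FreeGroup.lift fun i =>
      (of none : FreeGroup (Option I)) ^ d i * (of (some i) * (of (some (σ i)))⁻¹)) := by
  classical
  refine FreeGroup.injective_lift_of_ping_pong _
    (fun i => {z | of none ^ (-d i) * z ∈ startsWith (some i, true)})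
    (fun i => startsWith (some (σ i), true)) (fun i => ?nonempty) (fun i j hij => ?X_disjoint)
    (fun i j hij => startsWith.disjoint_iff_ne.2 (by simpa using hσ.ne hij))
    (fun i j => Set.disjoint_left.2 fun z hz hz' => neg_ne_zero.2 (hd i) <|
      eq_zero_of_zpow_mul_mem_startsWith (Option.some_ne_none _) (Option.some_ne_none _) hz' hz)
    (fun i => Set.smul_set_subset_iff.2 fun z hz => ?pos)
    (fun i => Set.smul_set_subset_iff.2 fun z hz => ?neg)
  case nonempty =>
    refine ⟨of none ^ d i * of (some i), ?_⟩
    simp [startsWith]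
  case X_disjoint =>
    refine Set.disjoint_left.2 fun z hz hz' => ?_
    have hz'' : of none ^ (d i - d j) * (of none ^ (-d i) * z) ∈ startsWith (some j, true) := by
      rw [← mul_assoc, ← zpow_add, show d i - d j + -d i = -d j by ring]
      exact hz'
    rw [eq_zero_of_zpow_mul_mem_startsWith (Option.some_ne_none i) (Option.some_ne_none j) hz hz'',
      zpow_zero, one_mul] at hz''
    refine (startsWith.disjoint_iff_ne.2 ?_).notMem_of_mem_left hz hz''
    simpa using hij
  case pos =>
    rw [Set.mem_ofPred_eq, smul_eq_mul, mul_assoc, mul_assoc, ← mul_assoc (_ ^ (-d i)), ← zpow_add,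
      neg_add_cancel, zpow_zero, one_mul]
    refine startsWith_mk_mul _ ((startsWith.disjoint_iff_ne.2 ?_).notMem_of_mem_left
      (startsWith_mk_mul (w := (some (σ i), false)) z hz))
    simpa using hne i
  case neg =>
    rw [Pi.inv_apply, smul_eq_mul, mul_inv_rev, mul_inv_rev, inv_inv, ← zpow_neg, mul_assoc,
      mul_assoc]
    refine startsWith_mk_mul _ ((startsWith.disjoint_iff_ne.2 ?_).notMem_of_mem_left
      (startsWith_mk_mul (w := (some i, false)) _ hz))
    simpa using (hne i).symm

end PingPong

namespace RelatorWord.Presents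

variable {k N : ℕ} [NeZero k] {e : ℕ → ℤ}

theorem exists_lift_of {K : Type u} [Group K] {ι : FreeGroup (Fin k) →* K} {τ : K}
    (hK : (freeWord k N e).Presents ι τ) (he : Function.Periodic e k)
    {M : Type u} [Group M] (T : M) {v : ℕ → M} (v_add : ∀ j, v (k + j) = v k * v j)
    (v_zero : v 0 = 1) (v_end : v (k * N) = 1) :
    ∃ φ : K →* M, φ τ = T ∧ φ.comp ι = FreeGroup.lift fun i : Fin k =>
      T ^ (-e i) * ((v i)⁻¹ * v (i + 1)) := by
  obtain ⟨φ, rfl, hφ⟩ := hK.exists_lift_tail he T v_add v_zero v_end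
  refine ⟨φ, rfl, FreeGroup.ext_hom _ _ fun i => ?_⟩
  have tail_succ := hφ (i + 1)
  rw [RelatorWord.tail_succ, RelatorWord.head, map_mul, map_mul, hφ, map_zpow] at tail_succ
  rw [FreeGroup.lift_apply_of, ← tail_succ]
  simp [RelatorWord.map, freeWord, mul_assoc]

variable {K : Type} [Group K] {ι : FreeGroup (Fin k) →* K} {τ : K}

theorem exists_exponentSum (hK : (freeWord k N e).Presents ι τ) (he : Function.Periodic e k) :
    ∃ φ : K →* Multiplicative ℤ, φ τ = .ofAdd (1 : ℤ) ∧
      φ.comp ι = FreeGroup.lift fun i : Fin k => Multiplicative.ofAdd (-e i) := by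
  obtain ⟨φ, φ_τ, φ_ι⟩ := hK.exists_lift_of he (Multiplicative.ofAdd (1 : ℤ)) (v := fun _ => 1)
    (fun _ => (mul_one 1).symm) rfl rfl
  refine ⟨φ, φ_τ, φ_ι.trans (congrArg FreeGroup.lift (funext fun i => ?_))⟩
  rw [← Int.ofAdd_mul]
  simp

theorem not_isOfFinOrder (hK : (freeWord k N e).Presents ι τ) (he : Function.Periodic e k) :
    ¬IsOfFinOrder τ := fun hτ => by
  obtain ⟨φ, φ_τ, -⟩ := hK.exists_exponentSum he
  have h := φ.isOfFinOrder hτ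
  rw [φ_τ, isOfFinOrder_iff_eq_one] at h
  exact one_ne_zero (ofAdd_eq_one.1 h)

theorem injective_of_freeWord (hK : (freeWord k N e).Presents ι τ)
    (he : Function.Periodic e k) (hne : ∀ j, e j ≠ 0) : Function.Injective ι := by
  suffices h : ∃ (M : Type) (_ : Group M) (φ : K →* M), Function.Injective (φ.comp ι) by
    obtain ⟨M, _, φ, hφ⟩ := h
    exact Function.Injective.of_comp hφ
  obtain rfl | hk := eq_or_lt_of_le (NeZero.one_le (n := k))
  · obtain ⟨φ, -, φ_ι⟩ := hK.exists_exponentSum he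
    refine ⟨_, _, φ, φ_ι ▸ (injective_iff_map_eq_one _).2 fun z hz => ?_⟩
    have z_mem : z ∈ Subgroup.closure (Set.range FreeGroup.of) :=
      FreeGroup.closure_range_of (Fin 1) ▸ Subgroup.mem_top z
    rw [Set.range_unique, Subgroup.mem_closure_singleton] at z_mem
    obtain ⟨n, rfl⟩ := z_mem
    rw [map_zpow, FreeGroup.lift_apply_of, ← Int.ofAdd_mul, ofAdd_eq_one, mul_eq_zero,
      neg_eq_zero] at hz
    rw [hz.resolve_left (hne _), zpow_zero]
  · let Z : ℕ → FreeGroup (Option (Fin k)) := fun j => .of (some (Fin.ofNat k j))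
    have Z_mul : ∀ m j, Z (k * m + j) = Z j := fun m j =>
      congrArg (FreeGroup.of ∘ some) (Fin.ext (Nat.mul_add_mod k m j))
    have Z_k : Z k = Z 0 := by simpa using Z_mul 1 0
    obtain ⟨φ, -, φ_ι⟩ := hK.exists_lift_of he (.of none) (v := fun j => Z 0 * (Z j)⁻¹)
      (fun j => by simpa [Z_k] using Z_mul 1 j) (mul_inv_cancel _)
      (by simpa [mul_inv_eq_one] using (Z_mul N 0).symm)
    have : Nontrivial (Fin k) := Fin.nontrivial_iff_two_le.2 hk
    have := lift_zpow_mul_mul_inv_injective (d := fun i : Fin k => -e i) (σ := (· + 1))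
      (fun i => neg_ne_zero.2 (hne i)) (add_left_injective 1) fun i => by simp [hk.ne']
    have Z_coe : ∀ i : Fin k, Z i = .of (some i) ∧ Z (i + 1) = .of (some (i + 1)) := fun i =>
      ⟨congrArg (FreeGroup.of ∘ some) (Fin.cast_val_eq_self i),
        congrArg (FreeGroup.of ∘ some) (Fin.ext (by simp [Fin.val_add]))⟩
    refine ⟨_, _, φ, ?_⟩
    simpa only [φ_ι, mul_inv_rev, inv_inv, inv_mul_cancel_right, Z_coe, mul_assoc,
      inv_mul_cancel_left] using this

end RelatorWord.Presents

section Amalgam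

/-- The amalgam is found in the HNN extension of `A × K` that conjugates the copy of `H` in the
first factor to the one in the second. -/
theorem exists_amalgam {A K : Type u} {H : Type*} [Group A] [Group K] [Group H] {α : H →* A}
    {β : H →* K} (hα : Function.Injective α) (hβ : Function.Injective β) :
    ∃ (M : Type u) (_ : Group M) (iA : A →* M) (iK : K →* M), Function.Injective iA ∧
      Function.Injective iK ∧ iA.comp α = iK.comp β := by
  have inl_injective : Function.Injective (MonoidHom.inl A K) := Prod.mk_left_injective 1
  have inr_injective : Function.Injective (MonoidHom.inr A K) := Prod.mk_right_injective 1
  let eα := MonoidHom.ofInjective (f := (MonoidHom.inl A K).comp α) (inl_injective.comp hα)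
  let eβ := MonoidHom.ofInjective (f := (MonoidHom.inr A K).comp β) (inr_injective.comp hβ)
  let φ := eα.symm.trans eβ
  have φ_eα : ∀ h, φ (eα h) = eβ h := fun h => congrArg eβ (eα.symm_apply_apply h)
  refine ⟨HNNExtension (A × K) _ _ φ, inferInstance,
    (MulAut.conj HNNExtension.t).toMonoidHom.comp (HNNExtension.of.comp (MonoidHom.inl A K)),
    HNNExtension.of.comp (MonoidHom.inr A K),
    (MulAut.conj _).injective.comp ((HNNExtension.of_injective φ).comp inl_injective),
    (HNNExtension.of_injective φ).comp inr_injective, MonoidHom.ext fun h => ?_⟩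
  exact (HNNExtension.equiv_eq_conj (eα h)).symm.trans (congrArg (HNNExtension.of ·.1) (φ_eα h))

end Amalgam

namespace RelatorWord

theorem Presents.hom_ext {A : Type*} {G M : Type u} [Group A] [Group G] [Group M]
    {W : RelatorWord A} {ι : A →* G} {t : G} (h : W.Presents ι t) {φ ψ : G →* M} (ht : φ t = ψ t)
    (hι : φ.comp ι = ψ.comp ι) : φ = ψ := by
  refine MonoidHom.eq_of_eqOn_dense h.closure_eq_top ?_
  rintro _ (rfl | ⟨a, rfl⟩)
  · exact ht
  · exact DFunLike.congr_fun hι a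

variable {κ : Type u}

/-- A word with coefficients in a free group, as an element of the free group that has the letter
`t` as one more generator. -/
def relator (W : RelatorWord (FreeGroup κ)) : FreeGroup (κ ⊕ Unit) :=
  (W.map (FreeGroup.map Sum.inl)).tail (.of (.inr ())) 1 W.length

theorem map_relator {M : Type*} [Group M] (φ : FreeGroup (κ ⊕ Unit) →* M)
    (W : RelatorWord (FreeGroup κ)) : φ W.relator =
      (W.map (φ.comp (FreeGroup.map Sum.inl))).tail (φ (.of (.inr ()))) 1 W.length := by
  rw [relator, map_tail, map_one]; rfl

theorem presents_presentedGroup (W : RelatorWord (FreeGroup κ)) :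
    W.Presents ((PresentedGroup.mk {W.relator}).comp (FreeGroup.map Sum.inl))
      (PresentedGroup.of (.inr ())) where
  relation := (W.map_relator _).symm.trans (PresentedGroup.one_of_mem rfl)
  exists_lift {M} _ α T h := by
    let f : κ ⊕ Unit → M := Sum.elim (fun x => α (.of x)) fun _ => T
    have lift_comp : (FreeGroup.lift f).comp (FreeGroup.map Sum.inl) = α :=
      FreeGroup.ext_hom _ _ fun x => by simp [f]
    have lift_relator : ∀ x ∈ ({W.relator} : Set _), FreeGroup.lift f x = 1 := by
      rintro _ rfl
      rwa [map_relator, lift_comp, FreeGroup.lift_apply_of]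
    exact ⟨PresentedGroup.toGroup lift_relator, PresentedGroup.toGroup.of lift_relator, lift_comp⟩
  closure_eq_top := by
    rw [← top_le_iff, ← PresentedGroup.closure_range_of, Subgroup.closure_le]
    rintro _ ⟨x | ⟨⟩, rfl⟩
    · exact Subgroup.subset_closure (.inr ⟨.of x, congrArg _ FreeGroup.map.of⟩)
    · exact Subgroup.subset_closure (.inl rfl)

end RelatorWord

theorem exists_isWindmill {G K κ : Type} [Group G] [Group K] {k N : ℕ} [NeZero k] {e : ℕ → ℤ}
    {β : FreeGroup (Fin k) →* FreeGroup κ} {ι : FreeGroup κ →* G} {ιK : FreeGroup (Fin k) →* K}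
    {t : G} {τ : K} (hG : ((freeWord k N e).map β).Presents ι t)
    (hK : (freeWord k N e).Presents ιK τ) (hβ : Function.Injective β)
    (he : Function.Periodic e k) (hne : ∀ j, e j ≠ 0) (hN : 0 < N) :
    ∃ i : K →* G, IsWindmill N e β ι ιK τ i := by
  obtain ⟨i, rfl, i_comp⟩ := hK.exists_lift (ι.comp β) t hG.relation
  obtain ⟨M, _, iA, iK, hiA, hiK, amalgamated⟩ :=
    exists_amalgam hβ (hK.injective_of_freeWord he hne)
  have iK_relation := congrArg iK hK.relation
  rw [map_one, RelatorWord.map_tail, map_one] at iK_relation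
  obtain ⟨Φ, Φ_τ, rfl⟩ := hG.exists_lift iA (iK τ) (by
    change (((freeWord k N e).map (iA.comp β))).tail _ _ _ = 1
    rw [amalgamated]
    exact iK_relation)
  have Φ_i : Φ.comp i = iK := hK.hom_ext Φ_τ (by
    rw [← amalgamated, MonoidHom.comp_assoc, i_comp]; rfl)
  have hi : Function.Injective i := .of_comp (f := Φ) (by rwa [← MonoidHom.coe_comp, Φ_i])
  exact ⟨i, hG, hK, i_comp.symm, .of_comp hiA, hi,
    hi.isOfFinOrder_iff.not.2 (hK.not_isOfFinOrder he), he, hne 0, hN⟩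

section Words

theorem mk_flatten_map {α I : Type*} (l : List I) (f : I → List (α × Bool)) :
    FreeGroup.mk (l.map f).flatten = (l.map fun i => FreeGroup.mk (f i)).prod := by
  induction l with
  | nil => rfl
  | cons a l ih =>
    rw [List.map_cons, List.flatten_cons, ← FreeGroup.mul_mk, ih, List.map_cons, List.prod_cons]

theorem mk_letterPow {α : Type*} (a : α) (m : ℤ) :
    FreeGroup.mk (letterPow a m) = FreeGroup.of a ^ m := by
  have mk_replicate : ∀ b n, FreeGroup.mk (List.replicate n (a, b)) = FreeGroup.mk [(a, b)] ^ n :=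
    fun b n => by
      induction n with
      | zero => rfl
      | succ n ih => rw [pow_succ', ← ih, FreeGroup.mul_mk]; rfl
  rw [letterPow, mk_replicate]
  rcases lt_or_ge 0 m with hm | hm
  · rw [decide_eq_true hm, ← zpow_natCast, Int.natAbs_of_nonneg hm.le]; rfl
  · rw [decide_eq_false hm.not_gt, ← zpow_natCast, Int.ofNat_natAbs_of_nonpos hm]
    exact (inv_zpow' (FreeGroup.of a) (-m)).trans (by rw [neg_neg])

theorem mk_embedWord {α α' : Type*} (f : α → α') (w : List (α × Bool)) :
    FreeGroup.mk (embedWord f w) = FreeGroup.map f (FreeGroup.mk w) :=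
  FreeGroup.map.mk.symm

variable {r k N : ℕ} [NeZero k]

theorem relator_eq_mk_windmillWord_pow (ε : Fin k → ℤ) (Wi : Fin k → List (Fin r × Bool)) :
    ((freeWord k N fun j => ε (Fin.ofNat k j)).map
      (FreeGroup.lift fun i => FreeGroup.mk (Wi i))).relator =
      FreeGroup.mk (windmillWord r k ε Wi) ^ N := by
  have he : Function.Periodic (fun j => ε (Fin.ofNat k j)) k := fun j =>
    congrArg ε (Fin.ext (Nat.add_mod_right j k))
  refine (((freeWord_isPeriodic he).map _).map _).tail_mul _ N |>.trans (congrArg (· ^ N) ?_)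
  rw [windmillWord, mk_flatten_map, RelatorWord.tail, one_mul, prodRange,
    ← List.map_coe_finRange_eq_range, List.map_map]
  refine congrArg List.prod (List.map_congr_left fun i _ => ?_)
  rw [← FreeGroup.mul_mk, mk_letterPow, mk_embedWord]
  simp [RelatorWord.map, freeWord]

end Words

theorem finitelyPresentedGroup_of_isFinitelyPresented (G : Type*) [Group G]
    [Group.IsFinitelyPresented G] : FinitelyPresentedGroup G := by
  obtain ⟨n, s, hs, ⟨f⟩⟩ := Group.IsFinitelyPresented.exists_mulEquiv_presentedGroup (G := G)
  exact ⟨Fin n, inferInstance, hs.toFinset, hs.coe_toFinset.symm ▸ ⟨f.symm⟩⟩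

/-- **Windmills and extreme 2-cells, special case of Corollary `cor:t-windmills`.**
If `W = t^{ε₁} W₁ ⋯ t^{ε_k} W_k` with each `εᵢ` a nonzero integer and each `Wᵢ` a
nonempty reduced word in `a₁, …, a_r`, and `W₁, …, W_k` freely generate a subgroup of
the free group on `a₁, …, a_r`, then `G = ⟨a₁, …, a_r, t ∣ W^N⟩` is coherent. -/
theorem coherence_one_relator_t_windmill
    (r k N : ℕ) (hr : 1 ≤ r) (hk : 1 ≤ k) (hN : 1 ≤ N)
    (ε : Fin k → ℤ) (hε : ∀ i, ε i ≠ 0)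
    (Wi : Fin k → List (Fin r × Bool))
    (hne : ∀ i, Wi i ≠ []) (hred : ∀ i, WordReduced (Wi i))
    (hfree : Function.Injective
      (FreeGroup.lift (fun i : Fin k => FreeGroup.mk (Wi i)) :
        FreeGroup (Fin k) →* FreeGroup (Fin r))) :
    CoherentGroup (PresentedGroup
      ({FreeGroup.mk (windmillWord r k ε Wi) ^ N} : Set (FreeGroup (Fin r ⊕ Unit)))) := by
  have : NeZero k := ⟨Nat.one_le_iff_ne_zero.1 hk⟩
  let e : ℕ → ℤ := fun j => ε (Fin.ofNat k j)
  have he : Function.Periodic e k := fun j => congrArg ε (Fin.ext (Nat.add_mod_right j k))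
  let W := (freeWord k N e).map (FreeGroup.lift fun i => FreeGroup.mk (Wi i))
  have relator_eq : W.relator = FreeGroup.mk (windmillWord r k ε Wi) ^ N :=
    relator_eq_mk_windmillWord_pow ε Wi
  rw [← relator_eq]
  obtain ⟨i, H⟩ := exists_isWindmill W.presents_presentedGroup
    (freeWord k N e).presents_presentedGroup hfree he (fun _ => hε _) hN
  have : Countable (PresentedGroup {W.relator}) := (PresentedGroup.mk_surjective _).countable
  intro L hL
  have := H.isFinitelyPresented_of_fg ((Group.fg_iff_subgroup_fg L).2 hL)
  exact finitelyPresentedGroup_of_isFinitelyPresented L
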